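/- arXiv:1006.0673 — 6 statements merged into one kernel-verified Lean document; each statement's English description precedes it below -/
import Mathlib

section
/- Let (S, A, δ, obs) be a POMDP, let s* be an initial state, and let φ ⊆ S^ω be a measurable objective. If there exists a randomized observation-based strategy σ with Pr_{s*}^σ(φ) = 1 (an almost-sure winning strategy), then there exists a pure observation-based strategy σ_P with Pr_{s*}^{σ_P}(φ) = 1. -/
open MeasureTheory
open scoped ENNReal

namespace Stmt12

variable {S A O : Type}

/-- The cylinder set of infinite plays extending the finite prefix `l`. -/
def Cyl (l : List S) : Set (ℕ → S) := {ρ | ∀ i : Fin l.length, ρ i.1 = l.get i}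

/-- Probability of observing the successive states `rest` after the history `hist ++ [cur]`,
when actions are drawn according to the strategy `σ` and states according to `δ`. -/
noncomputable def listProb [Fintype A] (δ : S → A → PMF S) (σ : List S → PMF A) :
    List S → S → List S → ℝ≥0∞
  | _, _, [] => 1
  | hist, cur, s' :: rest =>
      (∑' a, σ (hist ++ [cur]) a * δ cur a s') * listProb δ σ (hist ++ [cur]) s' rest

/-- `Pr` is the family of Ionescu–Tulcea play measures of the POMDP with transitions `δ`:
`Pr s σ` is a probability measure on `S^ω` (product σ-algebra, `S` discrete), and the
probability of the cylinder of plays starting with `s :: l` is the product of the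
one-step transition probabilities under the strategy `σ`. -/
def IsPlayMeasure [Fintype A] [MeasurableSpace S] (δ : S → A → PMF S)
    (Pr : S → (List S → PMF A) → Measure (ℕ → S)) : Prop :=
  (∀ s σ, IsProbabilityMeasure (Pr s σ)) ∧
    ∀ s σ (l : List S), Pr s σ (Cyl (s :: l)) = listProb δ σ [] s l

/-- A strategy is observation-based if it only depends on the observation sequence. -/
def ObsBased (obs : S → O) (σ : List S → PMF A) : Prop :=
  ∀ h h' : List S, h.map obs = h'.map obs → σ h = σ h'

/-- A strategy is pure if it always plays a Dirac distribution. -/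
def IsPure (σ : List S → PMF A) : Prop := ∀ h, ∃ a, σ h = PMF.pure a

/-!
A randomized strategy may as well draw its actions before the play starts: one action for every
observation history, all draws independent. The histories met along a play have pairwise distinct
lengths, so no draw is used twice, and on each cylinder the probability under the randomized
strategy is the average of the probabilities under the pure strategies so drawn. Cylinders
determine the play measure, which is therefore a mixture of play measures of pure strategies; one of
these gives the objective at least its average probability.
-/

/-- One-step transition probability: the probability of moving from `s` to `t` when the action is
drawn according to the strategy `σ` after the history `h`. -/
noncomputable def stepProb (δ : S → A → PMF S) (σ : List S → PMF A) (h : List S) (s t : S) :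
    ℝ≥0∞ :=
  ∑' a, σ h a * δ s a t

/-- The pure observation-based strategy that plays the action `g o` after the observation
history `o`. -/
noncomputable def pureStrategy (obs : S → O) (g : List O → A) (h : List S) : PMF A :=
  PMF.pure (g (h.map obs))

/-- The law of a random plan of actions: the actions for the different observation histories `o`
are drawn independently, with law `τ o`. -/
noncomputable abbrev planMeasure [MeasurableSpace A] (τ : List O → PMF A) :
    Measure (List O → A) :=
  Measure.infinitePi fun o => (τ o).toMeasure

section Probability

theorem lintegral_toMeasure {α : Type*} [MeasurableSpace α] [MeasurableSingletonClass α]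
    (p : PMF α) (f : α → ℝ≥0∞) : ∫⁻ a, f a ∂p.toMeasure = ∑' a, p a * f a := by
  rw [← p.restrict_toMeasure_support, lintegral_countable f p.support_countable]
  simp only [PMF.toMeasure_apply_singleton _ _ (measurableSet_singleton _), mul_comm (f _)]
  exact tsum_subtype_eq_of_support_subset (f := fun a => p a * f a)
    fun a ha => left_ne_zero_of_mul ha

theorem lintegral_infinitePi_prod_comp {ι κ : Type*} [Fintype κ] {X : ι → Type*}
    [∀ i, MeasurableSpace (X i)] (μ : ∀ i, Measure (X i)) [∀ i, IsProbabilityMeasure (μ i)]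
    {e : κ → ι} (he : Function.Injective e) {f : ∀ k, X (e k) → ℝ≥0∞}
    (hf : ∀ k, Measurable (f k)) :
    ∫⁻ x, ∏ k, f k (x (e k)) ∂Measure.infinitePi μ = ∏ k, ∫⁻ a, f k a ∂μ (e k) := by
  have hcoord : ProbabilityTheory.iIndepFun (fun i (x : ∀ i, X i) => x i) (Measure.infinitePi μ) :=
    ProbabilityTheory.iIndepFun_infinitePi (X := fun _ a => a) fun _ => measurable_id
  have hindep : ProbabilityTheory.iIndepFun (fun k (x : ∀ i, X i) => f k (x (e k)))
      (Measure.infinitePi μ) :=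
    (hcoord.precomp he).comp f hf
  rw [ProbabilityTheory.lintegral_prod_eq_prod_lintegral_of_indepFun _ _ hindep
    fun k => (hf k).comp (measurable_pi_apply _)]
  exact Finset.prod_congr rfl fun k _ =>
    (measurePreserving_eval_infinitePi μ (e k)).lintegral_comp (hf k)

end Probability

section Cylinders

theorem cyl_nil : Cyl ([] : List S) = Set.univ :=
  Set.eq_univ_of_forall fun _ i => i.elim0

theorem mem_cyl_map_range (ρ : ℕ → S) (n : ℕ) : ρ ∈ Cyl ((List.range n).map ρ) := by
  intro i
  simp only [List.get_eq_getElem, List.getElem_map, List.getElem_range]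

theorem cyl_subset_cyl {l l' : List S} {ρ : ℕ → S} (hρ : ρ ∈ Cyl l) (hρ' : ρ ∈ Cyl l')
    (hle : l.length ≤ l'.length) : Cyl l' ⊆ Cyl l := fun π hπ i =>
  calc
    π i = l'.get (i.castLE hle) := hπ (i.castLE hle)
    _ = ρ i := (hρ' (i.castLE hle)).symm
    _ = l.get i := hρ i

theorem isPiSystem_range_cyl : IsPiSystem (Set.range (Cyl (S := S))) := by
  rintro _ ⟨l, rfl⟩ _ ⟨l', rfl⟩ ⟨ρ, hρ, hρ'⟩
  rcases le_total l.length l'.length with hle | hle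
  · exact ⟨l', (Set.inter_eq_right.2 (cyl_subset_cyl hρ hρ' hle)).symm⟩
  · exact ⟨l, (Set.inter_eq_left.2 (cyl_subset_cyl hρ' hρ hle)).symm⟩

theorem measurableSet_cyl [MeasurableSpace S] [MeasurableSingletonClass S] (l : List S) :
    MeasurableSet (Cyl l) := by
  simp only [Cyl, Set.ofPred_forall]
  exact .iInter fun i => (measurableSet_singleton (l.get i)).preimage (measurable_pi_apply i.1)

theorem preimage_eval_eq_iUnion_cyl (n : ℕ) (B : Set S) :
    Function.eval n ⁻¹' B =
      ⋃ l : {l : List S // Cyl l ⊆ Function.eval n ⁻¹' B}, Cyl l.1 := by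
  refine Set.Subset.antisymm (fun ρ hρ => ?_) (Set.iUnion_subset fun l => l.2)
  have hprefix : Cyl ((List.range (n + 1)).map ρ) ⊆ Function.eval n ⁻¹' B := fun π hπ => by
    have hπn : π n = ρ n := by simpa using hπ ⟨n, by simp⟩
    simpa only [Set.mem_preimage, Function.eval, hπn] using hρ
  exact Set.mem_iUnion.2 ⟨⟨_, hprefix⟩, mem_cyl_map_range ρ (n + 1)⟩

theorem pi_eq_generateFrom_range_cyl [Countable S] [MeasurableSpace S]
    [MeasurableSingletonClass S] :
    (MeasurableSpace.pi : MeasurableSpace (ℕ → S)) =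
      MeasurableSpace.generateFrom (Set.range Cyl) := by
  refine le_antisymm (iSup_le fun n => ?_) (MeasurableSpace.generateFrom_le ?_)
  · rintro _ ⟨B, -, rfl⟩
    change MeasurableSet[MeasurableSpace.generateFrom (Set.range Cyl)] (Function.eval n ⁻¹' B)
    rw [preimage_eval_eq_iUnion_cyl]
    exact .iUnion fun l => MeasurableSpace.measurableSet_generateFrom ⟨l.1, rfl⟩
  · rintro _ ⟨l, rfl⟩
    exact measurableSet_cyl l

end Cylinders

section Strategies

theorem ObsBased.exists_eq_comp {obs : S → O} {σ : List S → PMF A} (hσ : ObsBased obs σ) :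
    ∃ τ : List O → PMF A, σ = τ ∘ List.map obs :=
  have : Nonempty (PMF A) := ⟨σ []⟩
  (Function.factorsThrough_iff σ).1 hσ

theorem isPure_pureStrategy (obs : S → O) (g : List O → A) : IsPure (pureStrategy obs g) :=
  fun _ => ⟨_, rfl⟩

theorem obsBased_pureStrategy (obs : S → O) (g : List O → A) :
    ObsBased obs (pureStrategy obs g) :=
  fun _ _ h => congrArg (fun o => PMF.pure (g o)) h

theorem stepProb_pureStrategy (δ : S → A → PMF S) (obs : S → O) (g : List O → A) (h : List S)
    (s t : S) : stepProb δ (pureStrategy obs g) h s t = δ s (g (h.map obs)) t := by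
  classical
  simp only [stepProb, pureStrategy, PMF.pure_apply, ite_mul, one_mul, zero_mul, tsum_ite_eq]

theorem listProb_eq_prod_stepProb [Fintype A] (δ : S → A → PMF S) (σ : List S → PMF A)
    (h : List S) (s : S) (l : List S) :
    listProb δ σ h s l =
      ∏ i : Fin l.length, stepProb δ σ (h ++ (s :: l).take (i + 1)) ((s :: l)[i]) l[i] := by
  induction l generalizing h s with
  | nil => simp [listProb]
  | cons t l ih =>
    rw [listProb, ih]
    refine Eq.trans ?_ (Fin.prod_univ_succ (M := ℝ≥0∞) (n := l.length) _).symm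
    simp [stepProb]

theorem injective_map_append_take_succ {α β : Type*} (f : α → β) (h : List α) (a : α)
    (l : List α) :
    Function.Injective fun i : Fin l.length => (h ++ (a :: l).take (i + 1)).map f := by
  intro i j hij
  have hlen := congrArg List.length hij
  simp only [List.length_map, List.length_append, List.length_take, List.length_cons] at hlen
  omega

end Strategies

section Mixture

variable [Fintype A] [MeasurableSpace A] [DiscreteMeasurableSpace A]

theorem measurable_listProb_pureStrategy (δ : S → A → PMF S) (obs : S → O) (h : List S) (s : S)
    (l : List S) : Measurable fun g => listProb δ (pureStrategy obs g) h s l := by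
  simp only [listProb_eq_prod_stepProb, stepProb_pureStrategy]
  exact Finset.measurable_prod _ fun i _ =>
    (Measurable.of_discrete (f := fun a => δ _ a _)).comp (measurable_pi_apply _)

theorem lintegral_listProb_pureStrategy (δ : S → A → PMF S) (obs : S → O) (τ : List O → PMF A)
    (h : List S) (s : S) (l : List S) :
    ∫⁻ g, listProb δ (pureStrategy obs g) h s l ∂planMeasure τ =
      listProb δ (τ ∘ List.map obs) h s l := by
  simp only [listProb_eq_prod_stepProb, stepProb_pureStrategy]
  refine (lintegral_infinitePi_prod_comp _ (injective_map_append_take_succ obs h s l)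
    (X := fun _ => A) (f := fun i a => δ ((s :: l)[i]) a l[i]) fun _ => .of_discrete).trans ?_
  simp only [lintegral_toMeasure, stepProb, Function.comp_apply]

end Mixture

namespace IsPlayMeasure

variable [Fintype A] [MeasurableSpace S] {δ : S → A → PMF S}
  {Pr : S → (List S → PMF A) → Measure (ℕ → S)}

open scoped Classical in
theorem measure_cyl_cons [MeasurableSingletonClass S] (hPr : IsPlayMeasure δ Pr) (s : S)
    (σ : List S → PMF A) (t : S) (l : List S) :
    Pr s σ (Cyl (t :: l)) = if t = s then listProb δ σ [] s l else 0 := by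
  obtain ⟨hprob, hCyl⟩ := hPr
  split_ifs with hts
  · rw [hts, hCyl]
  have hstart : Pr s σ (Cyl [s])ᶜ = 0 :=
    (prob_compl_eq_zero_iff (measurableSet_cyl [s])).2 (by simp only [hCyl, listProb])
  have hdisjoint : Cyl (t :: l) ⊆ (Cyl [s])ᶜ := fun ρ hρ hρs => hts <| calc
    t = ρ 0 := (hρ ⟨0, by simp⟩).symm
    _ = s := hρs ⟨0, by simp⟩
  exact measure_mono_null hdisjoint hstart

variable [MeasurableSpace A] [DiscreteMeasurableSpace A]

theorem measurable_measure_cyl_pureStrategy [MeasurableSingletonClass S]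
    (hPr : IsPlayMeasure δ Pr) (obs : S → O) (s : S) (l : List S) :
    Measurable fun g => Pr s (pureStrategy obs g) (Cyl l) := by
  have := hPr.1
  cases l with
  | nil => simp only [cyl_nil, measure_univ, measurable_const]
  | cons t l =>
    simp only [hPr.measure_cyl_cons]
    split_ifs
    exacts [measurable_listProb_pureStrategy δ obs [] s l, measurable_const]

theorem lintegral_measure_cyl_pureStrategy [MeasurableSingletonClass S]
    (hPr : IsPlayMeasure δ Pr) (obs : S → O) (τ : List O → PMF A) (s : S) (l : List S) :
    ∫⁻ g, Pr s (pureStrategy obs g) (Cyl l) ∂planMeasure τ = Pr s (τ ∘ List.map obs) (Cyl l) := by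
  have := hPr.1
  cases l with
  | nil => simp only [cyl_nil, measure_univ, lintegral_one]
  | cons t l =>
    simp only [hPr.measure_cyl_cons]
    split_ifs
    exacts [lintegral_listProb_pureStrategy δ obs τ [] s l, lintegral_zero]

variable [Countable S] [MeasurableSingletonClass S]

theorem measurable_measure_pureStrategy (hPr : IsPlayMeasure δ Pr) (obs : S → O) (s : S) :
    Measurable fun g => Pr s (pureStrategy obs g) := by
  have := hPr.1
  refine .measure_of_isPiSystem_of_isProbabilityMeasure pi_eq_generateFrom_range_cyl
    isPiSystem_range_cyl ?_
  rintro _ ⟨l, rfl⟩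
  exact hPr.measurable_measure_cyl_pureStrategy obs s l

theorem bind_planMeasure (hPr : IsPlayMeasure δ Pr) (obs : S → O) (τ : List O → PMF A) (s : S) :
    (planMeasure τ).bind (fun g => Pr s (pureStrategy obs g)) = Pr s (τ ∘ List.map obs) := by
  have := hPr.1
  have hmeas := (hPr.measurable_measure_pureStrategy obs s).aemeasurable (μ := planMeasure τ)
  symm
  refine ext_of_generate_finite _ pi_eq_generateFrom_range_cyl isPiSystem_range_cyl ?_ ?_
  · rintro _ ⟨l, rfl⟩
    rw [Measure.bind_apply (measurableSet_cyl l) hmeas,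
      hPr.lintegral_measure_cyl_pureStrategy]
  · simp only [Measure.bind_apply .univ hmeas, measure_univ, lintegral_one]

theorem lintegral_measure_pureStrategy (hPr : IsPlayMeasure δ Pr) (obs : S → O)
    (τ : List O → PMF A) (s : S) {φ : Set (ℕ → S)} (hφ : MeasurableSet φ) :
    ∫⁻ g, Pr s (pureStrategy obs g) φ ∂planMeasure τ = Pr s (τ ∘ List.map obs) φ := by
  rw [← hPr.bind_planMeasure,
    Measure.bind_apply hφ (hPr.measurable_measure_pureStrategy obs s).aemeasurable]

end IsPlayMeasure

theorem stmt_12_general [Countable S] [Fintype A] [MeasurableSpace S] [MeasurableSingletonClass S]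
    {δ : S → A → PMF S} {obs : S → O} {Pr : S → (List S → PMF A) → Measure (ℕ → S)}
    (hPr : IsPlayMeasure δ Pr) (s : S) {φ : Set (ℕ → S)} (hφ : MeasurableSet φ)
    {σ : List S → PMF A} (hσ : ObsBased obs σ) :
    ∃ σP : List S → PMF A, IsPure σP ∧ ObsBased obs σP ∧ Pr s σ φ ≤ Pr s σP φ := by
  let : MeasurableSpace A := ⊤
  have : DiscreteMeasurableSpace A := ⟨fun _ => trivial⟩
  obtain ⟨τ, rfl⟩ := hσ.exists_eq_comp
  have := hPr.1
  have hmix := hPr.lintegral_measure_pureStrategy obs τ s hφ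
  obtain ⟨g, hg⟩ := exists_lintegral_le (hmix ▸ measure_ne_top _ _)
  exact ⟨pureStrategy obs g, isPure_pureStrategy obs g, obsBased_pureStrategy obs g, hmix ▸ hg⟩

theorem stmt_12 {S A O : Type} [Fintype S] [Nonempty S] [Fintype A] [Nonempty A] [Fintype O]
    [MeasurableSpace S] [DiscreteMeasurableSpace S]
    (δ : S → A → PMF S) (obs : S → O)
    (Pr : S → (List S → PMF A) → Measure (ℕ → S)) (hPr : IsPlayMeasure δ Pr)
    (sStar : S) (φ : Set (ℕ → S)) (hφ : MeasurableSet φ)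
    (σ : List S → PMF A) (hσ : ObsBased obs σ) (hwin : Pr sStar σ φ = 1) :
    ∃ σP : List S → PMF A, IsPure σP ∧ ObsBased obs σP ∧ Pr sStar σP φ = 1 := by
  have := hPr.1
  obtain ⟨σP, hpure, hobs, hle⟩ := stmt_12_general hPr sStar hφ hσ
  exact ⟨σP, hpure, hobs, le_antisymm prob_le_one (hwin ▸ hle)⟩

end Stmt12
end

section
/- Let (S, A, δ, obs) be a POMDP, let s* be an initial state, and let φ ⊆ S^ω be a measurable objective. If there exists a randomized observation-based strategy σ with Pr_{s*}^σ(φ) > 0 (a positive winning strategy), then there exists a pure observation-based strategy σ_P with Pr_{s*}^{σ_P}(φ) > 0. -/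
open MeasureTheory
open scoped ENNReal

namespace Stmt13

variable {S A O : Type}

/-- The cylinder set of infinite plays extending the finite prefix `l`. -/
def Cyl (l : List S) : Set (ℕ → S) := {ρ | ∀ i : Fin l.length, ρ i.1 = l.get i}

/-- Probability of observing the successive states `rest` after the history `hist ++ [cur]`,
when actions are drawn according to the strategy `σ` and states according to `δ`. -/
noncomputable def listProb [Fintype A] (δ : S → A → PMF S) (σ : List S → PMF A) :
    List S → S → List S → ℝ≥0∞
  | _, _, [] => 1
  | hist, cur, s' :: rest =>
      (∑' a, σ (hist ++ [cur]) a * δ cur a s') * listProb δ σ (hist ++ [cur]) s' rest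

/-- `Pr` is the family of Ionescu–Tulcea play measures of the POMDP with transitions `δ`:
`Pr s σ` is a probability measure on `S^ω` (product σ-algebra, `S` discrete), and the
probability of the cylinder of plays starting with `s :: l` is the product of the
one-step transition probabilities under the strategy `σ`. -/
def IsPlayMeasure [Fintype A] [MeasurableSpace S] (δ : S → A → PMF S)
    (Pr : S → (List S → PMF A) → Measure (ℕ → S)) : Prop :=
  (∀ s σ, IsProbabilityMeasure (Pr s σ)) ∧
    ∀ s σ (l : List S), Pr s σ (Cyl (s :: l)) = listProb δ σ [] s l

/-- A strategy is observation-based if it only depends on the observation sequence. -/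
def ObsBased (obs : S → O) (σ : List S → PMF A) : Prop :=
  ∀ h h' : List S, h.map obs = h'.map obs → σ h = σ h'

/-- A strategy is pure if it always plays a Dirac distribution. -/
def IsPure (σ : List S → PMF A) : Prop := ∀ h, ∃ a, σ h = PMF.pure a

/-!
Instead of randomizing during the play, one can draw beforehand, independently for each observation
sequence, the action to be played there. A play meets each observation sequence at most once, so
the play measure of a randomized observation-based strategy is the average of the play measures of
the pure strategies obtained in this way. Some pure strategy therefore gives `φ` at least the
average probability.
-/

section Cylinders

theorem mem_cyl_iff {l : List S} {ρ : ℕ → S} :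
    ρ ∈ Cyl l ↔ ∀ i (h : i < l.length), ρ i = l[i] := by
  simp [Cyl, Fin.forall_iff]

theorem cyl_nil : Cyl ([] : List S) = Set.univ := by
  simp [Cyl]

theorem mem_cyl_map_range (ρ : ℕ → S) (n : ℕ) : ρ ∈ Cyl ((List.range n).map ρ) := by
  simp [mem_cyl_iff]

theorem disjoint_cyl_cons {x y : S} (hxy : x ≠ y) (l l' : List S) :
    Disjoint (Cyl (x :: l)) (Cyl (y :: l')) := by
  refine Set.disjoint_left.2 fun ρ hx hy => hxy ?_
  exact (mem_cyl_iff.1 hx 0 (by simp)).symm.trans (mem_cyl_iff.1 hy 0 (by simp))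

theorem cyl_subset_cyl {l l' : List S} (hlen : l.length ≤ l'.length)
    (hne : (Cyl l ∩ Cyl l').Nonempty) : Cyl l' ⊆ Cyl l := by
  obtain ⟨ρ, hρ, hρ'⟩ := hne
  rw [mem_cyl_iff] at hρ hρ'
  intro ρ' hmem
  rw [mem_cyl_iff] at hmem ⊢
  intro i hi
  rw [hmem i (by lia), ← hρ' i (by lia), hρ i hi]

theorem isPiSystem_range_cyl : IsPiSystem (Set.range (Cyl (S := S))) := by
  rintro _ ⟨l, rfl⟩ _ ⟨l', rfl⟩ hne
  rcases le_total l.length l'.length with hlen | hlen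
  · exact ⟨l', (Set.inter_eq_right.2 (cyl_subset_cyl hlen hne)).symm⟩
  · exact ⟨l, (Set.inter_eq_left.2 (cyl_subset_cyl hlen (Set.inter_comm _ _ ▸ hne))).symm⟩

theorem preimage_eval_eq_biUnion_cyl (i : ℕ) (t : Set S) :
    (fun ρ : ℕ → S => ρ i) ⁻¹' t = ⋃ l ∈ {l : List S | ∃ h : i < l.length, l[i] ∈ t}, Cyl l := by
  ext ρ
  simp only [Set.mem_preimage, Set.mem_iUnion, exists_prop]
  constructor
  · exact fun hρ => ⟨(List.range (i + 1)).map ρ, ⟨by simp, by simpa using hρ⟩,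
      mem_cyl_map_range ρ (i + 1)⟩
  · rintro ⟨l, ⟨hi, hl⟩, hρ⟩
    rwa [mem_cyl_iff.1 hρ i hi]

variable [MeasurableSpace S] [MeasurableSingletonClass S]

theorem measurableSet_cyl (l : List S) : MeasurableSet (Cyl l) := by
  simp only [Cyl, Set.ofPred_forall]
  exact MeasurableSet.iInter fun i =>
    (measurableSet_singleton (l.get i)).preimage (measurable_pi_apply i.1)

theorem generateFrom_range_cyl [Countable S] :
    (MeasurableSpace.pi : MeasurableSpace (ℕ → S)) =
      MeasurableSpace.generateFrom (Set.range (Cyl (S := S))) := by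
  apply le_antisymm
  · refine iSup_le fun i => ?_
    rintro _ ⟨t, -, rfl⟩
    rw [preimage_eval_eq_biUnion_cyl i t]
    exact MeasurableSet.biUnion (Set.to_countable _)
      fun l _ => MeasurableSpace.measurableSet_generateFrom ⟨l, rfl⟩
  · refine MeasurableSpace.generateFrom_le ?_
    rintro _ ⟨l, rfl⟩
    exact measurableSet_cyl l

end Cylinders

namespace IsPlayMeasure

variable [Fintype A] [MeasurableSpace S] [MeasurableSingletonClass S] {δ : S → A → PMF S}
  {Pr : S → (List S → PMF A) → Measure (ℕ → S)}

theorem apply_cyl_cons_of_ne (hPr : IsPlayMeasure δ Pr) {s x : S} (hx : x ≠ s)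
    (σ : List S → PMF A) (l : List S) : Pr s σ (Cyl (x :: l)) = 0 := by
  have := hPr.1 s σ
  have hstart : Pr s σ (Cyl [s]) = 1 := hPr.2 s σ []
  exact measure_mono_null (disjoint_cyl_cons hx l []).subset_compl_right
    ((prob_compl_eq_zero_iff (measurableSet_cyl [s])).2 hstart)

variable [Countable S] {Ω : Type*} [MeasurableSpace Ω] {σ : Ω → List S → PMF A} {s : S}

theorem measurable_of_listProb (hPr : IsPlayMeasure δ Pr)
    (hσ : ∀ l, Measurable fun ω => listProb δ (σ ω) [] s l) :
    Measurable fun ω => Pr s (σ ω) := by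
  have := hPr.1
  refine Measurable.measure_of_isPiSystem_of_isProbabilityMeasure generateFrom_range_cyl
    isPiSystem_range_cyl ?_
  rintro _ ⟨_ | ⟨x, l⟩, rfl⟩
  · simp only [cyl_nil, measure_univ, measurable_const]
  · by_cases hx : x = s
    · simpa only [hx, hPr.2] using hσ l
    · simp only [hPr.apply_cyl_cons_of_ne hx, measurable_const]

theorem eq_bind_of_lintegral_listProb (hPr : IsPlayMeasure δ Pr)
    (hσ : ∀ l, Measurable fun ω => listProb δ (σ ω) [] s l) (μ : Measure Ω)
    [IsProbabilityMeasure μ] {τ : List S → PMF A}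
    (hτ : ∀ l, ∫⁻ ω, listProb δ (σ ω) [] s l ∂μ = listProb δ τ [] s l) :
    Pr s τ = μ.bind fun ω => Pr s (σ ω) := by
  have := hPr.1
  have hbind {t : Set (ℕ → S)} (ht : MeasurableSet t) :
      μ.bind (fun ω => Pr s (σ ω)) t = ∫⁻ ω, Pr s (σ ω) t ∂μ :=
    Measure.bind_apply ht (hPr.measurable_of_listProb hσ).aemeasurable
  have huniv : Pr s τ Set.univ = μ.bind (fun ω => Pr s (σ ω)) Set.univ := by
    simp [hbind MeasurableSet.univ]
  refine ext_of_generate_finite _ generateFrom_range_cyl isPiSystem_range_cyl ?_ huniv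
  rintro _ ⟨_ | ⟨x, l⟩, rfl⟩
  · rwa [cyl_nil]
  · rw [hbind (measurableSet_cyl _)]
    by_cases hx : x = s
    · simp only [hx, hPr.2, hτ]
    · simp only [hPr.apply_cyl_cons_of_ne hx, lintegral_zero]

end IsPlayMeasure

theorem listProb_eq_prod [Fintype A] (δ : S → A → PMF S) (σ : List S → PMF A) (hist : List S)
    (cur : S) (l : List S) :
    listProb δ σ hist cur l = ∏ i : Fin l.length,
      (σ (hist ++ (cur :: l).take (i + 1))).bind (δ ((cur :: l).get i.castSucc)) (l.get i) := by
  induction l generalizing hist cur with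
  | nil => simp [listProb]
  | cons s' rest ih =>
    simp only [listProb, ih, List.length_cons, Fin.prod_univ_succ]
    simp

theorem ObsBased.exists_eq_comp {obs : S → O} {σ : List S → PMF A} (hσ : ObsBased obs σ) :
    ∃ τ : List O → PMF A, σ = τ ∘ List.map obs :=
  have : Nonempty (PMF A) := ⟨σ []⟩
  (Function.factorsThrough_iff σ).1 hσ

/-- The pure observation-based strategy that plays `f w` after the observation sequence `w`. -/
noncomputable def pureStrategy (obs : S → O) (f : List O → A) : List S → PMF A :=
  fun h => PMF.pure (f (h.map obs))

theorem isPure_pureStrategy (obs : S → O) (f : List O → A) : IsPure (pureStrategy obs f) :=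
  fun h => ⟨f (h.map obs), rfl⟩

theorem obsBased_pureStrategy (obs : S → O) (f : List O → A) :
    ObsBased obs (pureStrategy obs f) :=
  fun _ _ hobs => congrArg (fun w => PMF.pure (f w)) hobs

theorem listProb_pureStrategy [Fintype A] (δ : S → A → PMF S) (obs : S → O) (f : List O → A)
    (s : S) (l : List S) :
    listProb δ (pureStrategy obs f) [] s l = ∏ i : Fin l.length,
      δ ((s :: l).get i.castSucc) (f (((s :: l).take (i + 1)).map obs)) (l.get i) := by
  simp only [listProb_eq_prod, pureStrategy, PMF.pure_bind, List.nil_append]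

theorem injective_map_take_succ (obs : S → O) (s : S) (l : List S) :
    Function.Injective fun i : Fin l.length => ((s :: l).take (i + 1)).map obs := by
  intro i j hij
  have hlen := congrArg List.length hij
  simp only [List.length_map, List.length_take, List.length_cons] at hlen
  lia

theorem lintegral_infinitePi_prod_eval {ι κ : Type*} {X : κ → Type*} [Fintype ι]
    [∀ k, MeasurableSpace (X k)] (P : ∀ k, Measure (X k)) [∀ k, IsProbabilityMeasure (P k)]
    {c : ι → κ} (hc : Function.Injective c) {g : ∀ i, X (c i) → ℝ≥0∞}
    (hg : ∀ i, Measurable (g i)) :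
    ∫⁻ f, ∏ i, g i (f (c i)) ∂Measure.infinitePi P = ∏ i, ∫⁻ x, g i x ∂P (c i) := by
  have hindep : ProbabilityTheory.iIndepFun (fun i (f : ∀ k, X k) => g i (f (c i)))
      (Measure.infinitePi P) :=
    ((ProbabilityTheory.iIndepFun_infinitePi (P := P) (X := fun _ x => x)
      fun _ => measurable_id).precomp hc).comp g hg
  rw [ProbabilityTheory.lintegral_prod_eq_prod_lintegral_of_indepFun Finset.univ _ hindep
    fun i => (hg i).comp (measurable_pi_apply _)]
  exact Finset.prod_congr rfl fun i _ =>
    (measurePreserving_eval_infinitePi P (c i)).lintegral_comp (hg i)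

theorem lintegral_toMeasure_eq_bind_apply {α β : Type*} [Countable α] [MeasurableSpace α]
    [MeasurableSingletonClass α] (p : PMF α) (q : α → PMF β) (b : β) :
    ∫⁻ a, q a b ∂p.toMeasure = p.bind q b := by
  simp [lintegral_countable', PMF.toMeasure_apply_singleton, mul_comm]

section Randomization

variable [Fintype A] [MeasurableSpace A] [MeasurableSingletonClass A]

theorem measurable_listProb_pureStrategy (δ : S → A → PMF S) (obs : S → O) (s : S)
    (l : List S) : Measurable fun f : List O → A => listProb δ (pureStrategy obs f) [] s l := by
  simp only [listProb_pureStrategy]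
  exact Finset.measurable_prod _ fun i _ =>
    (Measurable.of_discrete (f := fun a => δ _ a (l.get i))).comp (measurable_pi_apply _)

theorem lintegral_listProb_pureStrategy (δ : S → A → PMF S) (obs : S → O)
    (τ : List O → PMF A) (s : S) (l : List S) :
    ∫⁻ f, listProb δ (pureStrategy obs f) [] s l
        ∂Measure.infinitePi (fun w => (τ w).toMeasure) =
      listProb δ (τ ∘ List.map obs) [] s l := by
  simp only [listProb_pureStrategy]
  rw [lintegral_infinitePi_prod_eval (fun w => (τ w).toMeasure) (injective_map_take_succ obs s l)
    (g := fun i a => δ ((s :: l).get i.castSucc) a (l.get i)) fun _ => Measurable.of_discrete]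
  simp only [lintegral_toMeasure_eq_bind_apply, listProb_eq_prod, Function.comp_apply,
    List.nil_append]

theorem IsPlayMeasure.eq_bind_pureStrategy [Countable S] [MeasurableSpace S]
    [MeasurableSingletonClass S] {δ : S → A → PMF S}
    {Pr : S → (List S → PMF A) → Measure (ℕ → S)} (hPr : IsPlayMeasure δ Pr) (obs : S → O)
    (τ : List O → PMF A) (s : S) :
    Pr s (τ ∘ List.map obs) =
      (Measure.infinitePi fun w => (τ w).toMeasure).bind fun f => Pr s (pureStrategy obs f) :=
  hPr.eq_bind_of_lintegral_listProb (measurable_listProb_pureStrategy δ obs s) _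
    (lintegral_listProb_pureStrategy δ obs τ s)

end Randomization

theorem stmt_13_general {S A O : Type} [Countable S] [Fintype A]
    [MeasurableSpace S] [MeasurableSingletonClass S]
    (δ : S → A → PMF S) (obs : S → O)
    (Pr : S → (List S → PMF A) → Measure (ℕ → S)) (hPr : IsPlayMeasure δ Pr)
    (sStar : S) (φ : Set (ℕ → S)) (hφ : MeasurableSet φ)
    (σ : List S → PMF A) (hσ : ObsBased obs σ) :
    ∃ σP : List S → PMF A, IsPure σP ∧ ObsBased obs σP ∧ Pr sStar σ φ ≤ Pr sStar σP φ := by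
  let _ : MeasurableSpace A := ⊤
  have hprob := hPr.1
  obtain ⟨τ, rfl⟩ := hσ.exists_eq_comp
  have hmeas : Measurable fun f => Pr sStar (pureStrategy obs f) :=
    hPr.measurable_of_listProb (measurable_listProb_pureStrategy δ obs sStar)
  have haverage : Pr sStar (τ ∘ List.map obs) φ =
      ∫⁻ f, Pr sStar (pureStrategy obs f) φ ∂Measure.infinitePi fun w => (τ w).toMeasure := by
    rw [hPr.eq_bind_pureStrategy, Measure.bind_apply hφ hmeas.aemeasurable]
  obtain ⟨f, hf⟩ := exists_lintegral_le (haverage ▸ measure_ne_top _ φ)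
  exact ⟨pureStrategy obs f, isPure_pureStrategy obs f, obsBased_pureStrategy obs f,
    haverage.trans_le hf⟩

theorem stmt_13 {S A O : Type} [Fintype S] [Nonempty S] [Fintype A] [Nonempty A] [Fintype O]
    [MeasurableSpace S] [DiscreteMeasurableSpace S]
    (δ : S → A → PMF S) (obs : S → O)
    (Pr : S → (List S → PMF A) → Measure (ℕ → S)) (hPr : IsPlayMeasure δ Pr)
    (sStar : S) (φ : Set (ℕ → S)) (hφ : MeasurableSet φ)
    (σ : List S → PMF A) (hσ : ObsBased obs σ) (hwin : 0 < Pr sStar σ φ) :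
    ∃ σP : List S → PMF A, IsPure σP ∧ ObsBased obs σP ∧ 0 < Pr sStar σP φ := by
  obtain ⟨σP, hpure, hobs, hle⟩ := stmt_13_general δ obs Pr hPr sStar φ hφ σ hσ
  exact ⟨σP, hpure, hobs, hwin.trans_le hle⟩

end Stmt13
end

section
/- Let (S, A, δ, obs) be a POMDP, let s* be an initial state, and let φ ⊆ S^ω be a measurable objective. If there exists a randomized observation-based strategy σ that is optimal, i.e., Pr_{s*}^σ(φ) equals the supremum over all randomized observation-based strategies σ' of Pr_{s*}^{σ'}(φ), then there exists a pure observation-based strategy σ_P that attains this same supremum. -/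
open MeasureTheory
open scoped ENNReal

namespace Stmt14

variable {S A O : Type}

/-- The cylinder set of infinite plays extending the finite prefix `l`. -/
def Cyl (l : List S) : Set (ℕ → S) := {ρ | ∀ i : Fin l.length, ρ i.1 = l.get i}

/-- Probability of observing the successive states `rest` after the history `hist ++ [cur]`,
when actions are drawn according to the strategy `σ` and states according to `δ`. -/
noncomputable def listProb [Fintype A] (δ : S → A → PMF S) (σ : List S → PMF A) :
    List S → S → List S → ℝ≥0∞
  | _, _, [] => 1
  | hist, cur, s' :: rest =>
      (∑' a, σ (hist ++ [cur]) a * δ cur a s') * listProb δ σ (hist ++ [cur]) s' rest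

/-- `Pr` is the family of Ionescu–Tulcea play measures of the POMDP with transitions `δ`:
`Pr s σ` is a probability measure on `S^ω` (product σ-algebra, `S` discrete), and the
probability of the cylinder of plays starting with `s :: l` is the product of the
one-step transition probabilities under the strategy `σ`. -/
def IsPlayMeasure [Fintype A] [MeasurableSpace S] (δ : S → A → PMF S)
    (Pr : S → (List S → PMF A) → Measure (ℕ → S)) : Prop :=
  (∀ s σ, IsProbabilityMeasure (Pr s σ)) ∧
    ∀ s σ (l : List S), Pr s σ (Cyl (s :: l)) = listProb δ σ [] s l

/-- A strategy is observation-based if it only depends on the observation sequence. -/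
def ObsBased (obs : S → O) (σ : List S → PMF A) : Prop :=
  ∀ h h' : List S, h.map obs = h'.map obs → σ h = σ h'

/-- A strategy is pure if it always plays a Dirac distribution. -/
def IsPure (σ : List S → PMF A) : Prop := ∀ h, ∃ a, σ h = PMF.pure a

/-! A randomized observation-based strategy `σ` plays like a pure one chosen at random beforehand:
draw `f : List O → A` with independent coordinates, `f o` following the law of `σ` after the
observations `o`, and play `f`. The prefixes of a history have pairwise different lengths, so a
play never queries the same coordinate twice, and independence makes the average over `f` of the
probability of every cylinder equal to its probability under `σ`. The play measure of `σ` is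
therefore a mixture of play measures of pure strategies, and for every event one of these does at
least as well as the average. -/

section Cylinders

theorem cyl_nil : Cyl ([] : List S) = Set.univ := by
  ext ρ
  simp [Cyl]

theorem head_eq_of_mem_cyl_cons {s : S} {l : List S} {ρ : ℕ → S} (hρ : ρ ∈ Cyl (s :: l)) :
    ρ 0 = s :=
  hρ ⟨0, by simp⟩

theorem cyl_eq_cylinder {l : List S} {ρ : ℕ → S} (hρ : ρ ∈ Cyl l) :
    Cyl l = PiNat.cylinder ρ l.length := by
  ext y
  refine ⟨fun hy i hi => (hy ⟨i, hi⟩).trans (hρ ⟨i, hi⟩).symm, fun hy i => ?_⟩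
  exact (hy i i.2).trans (hρ i)

theorem isPiSystem_range_cyl : IsPiSystem (Set.range (Cyl : List S → Set (ℕ → S))) := by
  rintro _ ⟨l₁, rfl⟩ _ ⟨l₂, rfl⟩ ⟨ρ, hρ₁, hρ₂⟩
  rw [cyl_eq_cylinder hρ₁, cyl_eq_cylinder hρ₂]
  rcases le_total l₁.length l₂.length with h | h
  · rw [Set.inter_eq_right.2 (PiNat.cylinder_anti ρ h)]
    exact ⟨l₂, cyl_eq_cylinder hρ₂⟩
  · rw [Set.inter_eq_left.2 (PiNat.cylinder_anti ρ h)]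
    exact ⟨l₁, cyl_eq_cylinder hρ₁⟩

theorem preimage_eval_singleton_eq_biUnion_cyl (n : ℕ) (s : S) :
    (fun ρ : ℕ → S => ρ n) ⁻¹' {s} = ⋃ l ∈ {l : List S | l[n]? = some s}, Cyl l := by
  ext ρ
  simp only [Set.mem_preimage, Set.mem_singleton_iff, Set.mem_iUnion, exists_prop]
  constructor
  · intro hρ
    exact ⟨(List.range (n + 1)).map ρ, by simp [hρ], fun i => by simp⟩
  · rintro ⟨l, hl, hρ⟩
    obtain ⟨hn, hl⟩ := List.getElem?_eq_some_iff.1 hl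
    exact (hρ ⟨n, hn⟩).trans hl

variable [MeasurableSpace S]

theorem measurableSet_cyl [MeasurableSingletonClass S] (l : List S) : MeasurableSet (Cyl l) := by
  have hCyl : Cyl l = ⋂ i : Fin l.length, (fun ρ : ℕ → S => ρ i) ⁻¹' {l.get i} := by
    ext ρ
    simp [Cyl]
  rw [hCyl]
  exact MeasurableSet.iInter fun i => measurable_pi_apply _ (measurableSet_singleton _)

theorem generateFrom_range_cyl [Countable S] [MeasurableSingletonClass S] :
    MeasurableSpace.generateFrom (Set.range (Cyl : List S → Set (ℕ → S))) =
      MeasurableSpace.pi := by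
  refine le_antisymm (MeasurableSpace.generateFrom_le ?_) (iSup_le fun n => ?_)
  · rintro _ ⟨l, rfl⟩
    exact measurableSet_cyl l
  · rintro _ ⟨t, -, rfl⟩
    rw [← Set.biUnion_preimage_singleton]
    refine .biUnion t.to_countable fun s _ => ?_
    rw [preimage_eval_singleton_eq_biUnion_cyl]
    exact .biUnion (Set.to_countable _) fun l _ =>
      MeasurableSpace.measurableSet_generateFrom ⟨l, rfl⟩

end Cylinders

section Integrals

theorem lintegral_prod_eval_infinitePi {ι κ : Type*} [Fintype κ] {X : ι → Type*}
    [∀ i, MeasurableSpace (X i)] (μ : ∀ i, Measure (X i)) [∀ i, IsProbabilityMeasure (μ i)]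
    {g : κ → ι} (hg : Function.Injective g) {F : ∀ k, X (g k) → ℝ≥0∞}
    (hF : ∀ k, Measurable (F k)) :
    ∫⁻ x, ∏ k, F k (x (g k)) ∂Measure.infinitePi μ = ∏ k, ∫⁻ y, F k y ∂μ (g k) := by
  have hindep : ProbabilityTheory.iIndepFun (fun k (x : ∀ i, X i) => F k (x (g k)))
      (Measure.infinitePi μ) :=
    ((ProbabilityTheory.iIndepFun_infinitePi fun _ => measurable_id).precomp hg).comp F hF
  calc ∫⁻ x, ∏ k, F k (x (g k)) ∂Measure.infinitePi μ
    _ = ∏ k, ∫⁻ x, F k (x (g k)) ∂Measure.infinitePi μ :=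
      ProbabilityTheory.lintegral_prod_eq_prod_lintegral_of_indepFun _ _ hindep
        fun k => (hF k).comp (measurable_pi_apply _)
    _ = ∏ k, ∫⁻ y, F k y ∂μ (g k) := Finset.prod_congr rfl fun k _ =>
      (measurePreserving_eval_infinitePi μ (g k)).lintegral_comp (hF k)

theorem lintegral_pmf_toMeasure {α : Type*} [Countable α] [MeasurableSpace α]
    [MeasurableSingletonClass α] (p : PMF α) (F : α → ℝ≥0∞) :
    ∫⁻ a, F a ∂p.toMeasure = ∑' a, p a * F a := by
  rw [lintegral_countable']
  refine tsum_congr fun a => ?_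
  rw [p.toMeasure_apply_singleton a (measurableSet_singleton a), mul_comm]

end Integrals

section Strategies

theorem ObsBased.exists_eq_comp_map {obs : S → O} {σ : List S → PMF A} (hσ : ObsBased obs σ) :
    ∃ τ : List O → PMF A, σ = τ ∘ List.map obs := by
  have : Nonempty (PMF A) := ⟨σ []⟩
  exact (Function.factorsThrough_iff σ).1 fun h h' => hσ h h'

/-- The pure observation-based strategy that plays the action `f o` after the sequence of
observations `o`. -/
noncomputable def pureStrategy (obs : S → O) (f : List O → A) : List S → PMF A :=
  fun h => PMF.pure (f (h.map obs))

theorem isPure_pureStrategy (obs : S → O) (f : List O → A) : IsPure (pureStrategy obs f) :=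
  fun _ => ⟨_, rfl⟩

theorem obsBased_pureStrategy (obs : S → O) (f : List O → A) :
    ObsBased obs (pureStrategy obs f) := by
  intro h h' hobs
  rw [pureStrategy, hobs, pureStrategy]

theorem injective_map_take_succ (obs : S → O) (s : S) (l : List S) :
    Function.Injective fun i : Fin l.length => ((s :: l).take (i + 1)).map obs := by
  intro i j hij
  have hlength := congrArg List.length hij
  simp only [List.length_map, List.length_take, List.length_cons] at hlength
  omega

variable [Fintype A] (δ : S → A → PMF S)

theorem listProb_eq_prod (σ : List S → PMF A) (hist : List S) (s : S) (l : List S) :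
    listProb δ σ hist s l = ∏ i : Fin l.length,
      ∑' a, σ (hist ++ (s :: l).take (i + 1)) a * δ ((s :: l).get i.castSucc) a (l.get i) := by
  induction l generalizing hist s with
  | nil => simp [listProb]
  | cons s' l ih =>
    rw [listProb, ih]
    refine .trans ?_ (Fin.prod_univ_succ _).symm
    simp

theorem listProb_pureStrategy (obs : S → O) (f : List O → A) (s : S) (l : List S) :
    listProb δ (pureStrategy obs f) [] s l = ∏ i : Fin l.length,
      δ ((s :: l).get i.castSucc) (f (((s :: l).take (i + 1)).map obs)) (l.get i) := by
  rw [listProb_eq_prod]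
  refine Finset.prod_congr rfl fun i _ => ?_
  rw [tsum_eq_single (f (((s :: l).take (i + 1)).map obs))]
  · simp [pureStrategy]
  · intro a ha
    rw [List.nil_append, pureStrategy, PMF.pure_apply_of_ne _ _ ha, zero_mul]

variable [MeasurableSpace A] [DiscreteMeasurableSpace A]

theorem measurable_listProb_pureStrategy (obs : S → O) (s : S) (l : List S) :
    Measurable fun f : List O → A => listProb δ (pureStrategy obs f) [] s l := by
  simp_rw [listProb_pureStrategy]
  refine Finset.measurable_fun_prod _ fun i _ => ?_
  exact (Measurable.of_discrete (f := fun a => δ ((s :: l).get i.castSucc) a (l.get i))).comp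
    (measurable_pi_apply _)

theorem lintegral_listProb_pureStrategy (obs : S → O) (τ : List O → PMF A) (s : S)
    (l : List S) :
    ∫⁻ f, listProb δ (pureStrategy obs f) [] s l
        ∂Measure.infinitePi (fun o => (τ o).toMeasure) =
      listProb δ (τ ∘ List.map obs) [] s l := by
  simp_rw [listProb_pureStrategy, listProb_eq_prod]
  refine (lintegral_prod_eval_infinitePi (fun o => (τ o).toMeasure)
    (injective_map_take_succ obs s l)
    (F := fun i a => δ ((s :: l).get i.castSucc) a (l.get i)) fun _ => .of_discrete).trans ?_
  exact Finset.prod_congr rfl fun i _ => lintegral_pmf_toMeasure _ _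

end Strategies

namespace IsPlayMeasure

variable [Fintype A] [MeasurableSpace S] {δ : S → A → PMF S}
  {Pr : S → (List S → PMF A) → Measure (ℕ → S)}

theorem apply_cyl_cons_of_ne [MeasurableSingletonClass S] (hPr : IsPlayMeasure δ Pr) {s t : S}
    (hts : t ≠ s) (σ : List S → PMF A) (l : List S) : Pr s σ (Cyl (t :: l)) = 0 := by
  have := hPr.1 s σ
  have hstart : Pr s σ (Cyl [s]) = 1 := hPr.2 s σ []
  have hdisj : Cyl (t :: l) ⊆ (Cyl [s])ᶜ := fun ρ hρt hρs =>
    hts ((head_eq_of_mem_cyl_cons hρt).symm.trans (head_eq_of_mem_cyl_cons hρs))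
  exact measure_mono_null hdisj ((prob_compl_eq_zero_iff (measurableSet_cyl [s])).2 hstart)

theorem apply_cyl_eq_listProb_or_eq_zero [MeasurableSingletonClass S]
    (hPr : IsPlayMeasure δ Pr) (s : S) (l : List S) :
    (∃ l', ∀ σ, Pr s σ (Cyl l) = listProb δ σ [] s l') ∨ ∀ σ, Pr s σ (Cyl l) = 0 := by
  cases l with
  | nil =>
    refine .inl ⟨[], fun σ => ?_⟩
    have := hPr.1 s σ
    rw [cyl_nil, measure_univ, listProb]
  | cons t l =>
    by_cases hts : t = s
    · subst hts
      exact .inl ⟨l, fun σ => hPr.2 t σ l⟩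
    · exact .inr fun σ => hPr.apply_cyl_cons_of_ne hts σ l

variable [Countable S] [MeasurableSingletonClass S] [MeasurableSpace A]
  [DiscreteMeasurableSpace A]

theorem measurable_pureStrategy (hPr : IsPlayMeasure δ Pr) (obs : S → O) (s : S) :
    Measurable fun f : List O → A => Pr s (pureStrategy obs f) := by
  have := hPr.1
  refine .measure_of_isPiSystem_of_isProbabilityMeasure generateFrom_range_cyl.symm
    isPiSystem_range_cyl ?_
  rintro _ ⟨l, rfl⟩
  obtain ⟨l', hl'⟩ | hzero := hPr.apply_cyl_eq_listProb_or_eq_zero s l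
  · simpa only [hl'] using measurable_listProb_pureStrategy δ obs s l'
  · simpa only [hzero] using measurable_const

theorem bind_pureStrategy (hPr : IsPlayMeasure δ Pr) (obs : S → O) (τ : List O → PMF A)
    (s : S) :
    (Measure.infinitePi fun o => (τ o).toMeasure).bind (fun f => Pr s (pureStrategy obs f)) =
      Pr s (τ ∘ List.map obs) := by
  have := hPr.1
  have hmeas := (hPr.measurable_pureStrategy obs s).aemeasurable
    (μ := Measure.infinitePi fun o => (τ o).toMeasure)
  symm
  refine ext_of_generate_finite _ generateFrom_range_cyl.symm isPiSystem_range_cyl ?_ ?_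
  · rintro _ ⟨l, rfl⟩
    rw [Measure.bind_apply (measurableSet_cyl l) hmeas]
    obtain ⟨l', hl'⟩ | hzero := hPr.apply_cyl_eq_listProb_or_eq_zero s l
    · simp only [hl', lintegral_listProb_pureStrategy]
    · simp only [hzero, lintegral_zero]
  · simp only [Measure.bind_apply .univ hmeas, measure_univ, lintegral_one]

theorem exists_le_pureStrategy (hPr : IsPlayMeasure δ Pr) (obs : S → O) (τ : List O → PMF A)
    (s : S) {φ : Set (ℕ → S)} (hφ : MeasurableSet φ) :
    ∃ f : List O → A, Pr s (τ ∘ List.map obs) φ ≤ Pr s (pureStrategy obs f) φ := by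
  have := hPr.1 s (τ ∘ List.map obs)
  have hmix : Pr s (τ ∘ List.map obs) φ = ∫⁻ f, Pr s (pureStrategy obs f) φ
      ∂Measure.infinitePi (fun o => (τ o).toMeasure) := by
    rw [← hPr.bind_pureStrategy,
      Measure.bind_apply hφ (hPr.measurable_pureStrategy obs s).aemeasurable]
  rw [hmix]
  exact exists_lintegral_le (hmix ▸ measure_ne_top _ _)

end IsPlayMeasure

theorem stmt_14_general [Fintype A] [Countable S] [MeasurableSpace S] [MeasurableSingletonClass S]
    {δ : S → A → PMF S} (obs : S → O) {Pr : S → (List S → PMF A) → Measure (ℕ → S)}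
    (hPr : IsPlayMeasure δ Pr) (s : S) {φ : Set (ℕ → S)} (hφ : MeasurableSet φ)
    {σ : List S → PMF A} (hσ : ObsBased obs σ) :
    ∃ σP : List S → PMF A, IsPure σP ∧ ObsBased obs σP ∧ Pr s σ φ ≤ Pr s σP φ := by
  let _ : MeasurableSpace A := ⊤
  obtain ⟨τ, rfl⟩ := hσ.exists_eq_comp_map
  obtain ⟨f, hf⟩ := hPr.exists_le_pureStrategy obs τ s hφ
  exact ⟨pureStrategy obs f, isPure_pureStrategy obs f, obsBased_pureStrategy obs f, hf⟩

theorem stmt_14 {S A O : Type} [Fintype S] [Nonempty S] [Fintype A] [Nonempty A] [Fintype O]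
    [MeasurableSpace S] [DiscreteMeasurableSpace S]
    (δ : S → A → PMF S) (obs : S → O)
    (Pr : S → (List S → PMF A) → Measure (ℕ → S)) (hPr : IsPlayMeasure δ Pr)
    (sStar : S) (φ : Set (ℕ → S)) (hφ : MeasurableSet φ)
    (σ : List S → PMF A) (hσ : ObsBased obs σ)
    (hopt : Pr sStar σ φ = ⨆ σ' : {σ' : List S → PMF A // ObsBased obs σ'}, Pr sStar σ'.1 φ) :
    ∃ σP : List S → PMF A, IsPure σP ∧ ObsBased obs σP ∧
      Pr sStar σP φ = ⨆ σ' : {σ' : List S → PMF A // ObsBased obs σ'}, Pr sStar σ'.1 φ := by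
  obtain ⟨σP, hpure, hobs, hle⟩ := stmt_14_general obs hPr sStar hφ hσ
  exact ⟨σP, hpure, hobs, le_antisymm
    (le_iSup (fun σ' : {σ' // ObsBased obs σ'} => Pr sStar σ'.1 φ) ⟨σP, hobs⟩) (hopt ▸ hle)⟩

end Stmt14
end

section
/- Let (S, A, δ, obs) be a POMDP with deterministic transition function, i.e., every δ(s,a) is a Dirac distribution. Then for every initial state s* and every measurable objective φ ⊆ S^ω, the value sup over randomized observation-based strategies σ of Pr_{s*}^σ(φ) is either 0 or 1. -/
/-!
If some strategy gives `φ` positive probability, then `φ` contains a play `ρ` from the initial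
state all of whose steps are possible: the plays violating this lie in countably many null
cylinders. As transitions are deterministic, each step of `ρ` is forced by a suitable action, so
playing these actions in order, blindly, produces `ρ` almost surely. A blind strategy is
observation-based whatever the observations are, so the value is `1`.
-/

open MeasureTheory
open scoped ENNReal

namespace Stmt15

variable {S A O : Type}

/-- The cylinder set of infinite plays extending the finite prefix `l`. -/
def Cyl (l : List S) : Set (ℕ → S) := {ρ | ∀ i : Fin l.length, ρ i.1 = l.get i}

/-- Probability of observing the successive states `rest` after the history `hist ++ [cur]`,
when actions are drawn according to the strategy `σ` and states according to `δ`. -/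
noncomputable def listProb [Fintype A] (δ : S → A → PMF S) (σ : List S → PMF A) :
    List S → S → List S → ℝ≥0∞
  | _, _, [] => 1
  | hist, cur, s' :: rest =>
      (∑' a, σ (hist ++ [cur]) a * δ cur a s') * listProb δ σ (hist ++ [cur]) s' rest

/-- `Pr` is the family of Ionescu–Tulcea play measures of the POMDP with transitions `δ`:
`Pr s σ` is a probability measure on `S^ω` (product σ-algebra, `S` discrete), and the
probability of the cylinder of plays starting with `s :: l` is the product of the
one-step transition probabilities under the strategy `σ`. -/
def IsPlayMeasure [Fintype A] [MeasurableSpace S] (δ : S → A → PMF S)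
    (Pr : S → (List S → PMF A) → Measure (ℕ → S)) : Prop :=
  (∀ s σ, IsProbabilityMeasure (Pr s σ)) ∧
    ∀ s σ (l : List S), Pr s σ (Cyl (s :: l)) = listProb δ σ [] s l

/-- A strategy is observation-based if it only depends on the observation sequence. -/
def ObsBased (obs : S → O) (σ : List S → PMF A) : Prop :=
  ∀ h h' : List S, h.map obs = h'.map obs → σ h = σ h'

/-- A strategy is pure if it always plays a Dirac distribution. -/
def IsPure (σ : List S → PMF A) : Prop := ∀ h, ∃ a, σ h = PMF.pure a

/-- One-step reachability: some action leads from `s` to `t` with positive probability. -/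
def Step (δ : S → A → PMF S) (s t : S) : Prop := ∃ a, t ∈ (δ s a).support

/-- The open-loop (blind) strategy playing the actions `a 0, a 1, …` whatever happens. The history
of length `n + 1` precedes the action `a n`, whence the subtraction; the value at the empty
history is irrelevant. -/
noncomputable def openLoop (a : ℕ → A) (h : List S) : PMF A := PMF.pure (a (h.length - 1))

lemma obsBased_openLoop (obs : S → O) (a : ℕ → A) : ObsBased obs (openLoop a) := by
  intro h h' hobs
  have hlen : h.length = h'.length := by simpa using congrArg List.length hobs
  simp only [openLoop, hlen]

lemma exists_eq_pure_of_step {δ : S → A → PMF S} (hdet : ∀ s a, ∃ t, δ s a = PMF.pure t) {s t : S}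
    (hst : Step δ s t) : ∃ a, δ s a = PMF.pure t := by
  obtain ⟨a, ha⟩ := hst
  obtain ⟨u, hu⟩ := hdet s a
  rw [hu, PMF.mem_support_pure_iff] at ha
  exact ⟨a, ha ▸ hu⟩

lemma mem_cyl_map_range {ρ x : ℕ → S} {n : ℕ} :
    x ∈ Cyl ((List.range n).map ρ) ↔ ∀ i < n, x i = ρ i := by
  simp [Cyl, Fin.forall_iff]

lemma cons_map_range' (ρ : ℕ → S) (n : ℕ) :
    ρ 0 :: (List.range' 1 n).map ρ = (List.range (n + 1)).map ρ := by
  rw [List.range_eq_range', List.range'_succ, List.map_cons]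

lemma measurableSet_cyl [MeasurableSpace S] [MeasurableSingletonClass S] (l : List S) :
    MeasurableSet (Cyl l) := by
  have hcyl : Cyl l = ⋂ i : Fin l.length, (fun ρ : ℕ → S => ρ i) ⁻¹' {l.get i} := by
    ext ρ
    simp [Cyl]
  rw [hcyl]
  exact .iInter fun i => measurable_pi_apply _ (measurableSet_singleton _)

section ListProb

variable [Fintype A]

lemma listProb_cons (δ : S → A → PMF S) (σ : List S → PMF A) (hist : List S) (s t : S)
    (l : List S) :
    listProb δ σ hist s (t :: l) =
      (σ (hist ++ [s])).bind (δ s) t * listProb δ σ (hist ++ [s]) t l := by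
  rw [listProb, PMF.bind_apply]

lemma isChain_step_of_listProb_ne_zero {δ : S → A → PMF S} {σ : List S → PMF A} {l : List S} :
    ∀ {hist : List S} {s : S}, listProb δ σ hist s l ≠ 0 → (s :: l).IsChain (Step δ) := by
  induction l with
  | nil => exact fun _ => List.isChain_singleton _
  | cons t l ih =>
    intro hist s h
    rw [listProb_cons] at h
    have hmem : t ∈ ((σ (hist ++ [s])).bind (δ s)).support := left_ne_zero_of_mul h
    obtain ⟨a, -, ha⟩ := (PMF.mem_support_bind_iff _ _ _).1 hmem
    exact List.isChain_cons_cons.2 ⟨⟨a, ha⟩, ih (right_ne_zero_of_mul h)⟩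

lemma listProb_openLoop_eq_one {δ : S → A → PMF S} {a : ℕ → A} {ρ : ℕ → S}
    (hstep : ∀ n, δ (ρ n) (a n) = PMF.pure (ρ (n + 1))) (n : ℕ) (hist : List S) :
    listProb δ (openLoop a) hist (ρ hist.length)
      ((List.range' (hist.length + 1) n).map ρ) = 1 := by
  induction n generalizing hist with
  | zero => rfl
  | succ n ih =>
    have hrest := ih (hist ++ [ρ hist.length])
    rw [List.length_append, List.length_singleton] at hrest
    rw [List.range'_succ, List.map_cons, listProb_cons, hrest, openLoop, PMF.pure_bind,
      List.length_append, List.length_singleton, Nat.add_sub_cancel, hstep, PMF.pure_apply_self,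
      mul_one]

end ListProb

namespace IsPlayMeasure

variable [Fintype A] [MeasurableSpace S] {δ : S → A → PMF S}
  {Pr : S → (List S → PMF A) → Measure (ℕ → S)}

lemma ae_listProb_ne_zero [Countable S] (hPr : IsPlayMeasure δ Pr) (s : S)
    (σ : List S → PMF A) : ∀ᵐ ρ ∂Pr s σ, ∀ l, ρ ∈ Cyl (s :: l) → listProb δ σ [] s l ≠ 0 := by
  refine ae_all_iff.2 fun l => ?_
  by_cases hl : listProb δ σ [] s l = 0
  · filter_upwards [measure_eq_zero_iff_ae_notMem.1 ((hPr.2 s σ l).trans hl)] with ρ hρ hmem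
    exact absurd hmem hρ
  · exact .of_forall fun _ _ => hl

variable [MeasurableSingletonClass S]

lemma ae_mem_cyl_of_listProb_eq_one (hPr : IsPlayMeasure δ Pr) {s : S} {σ : List S → PMF A}
    {l : List S} (hl : listProb δ σ [] s l = 1) : ∀ᵐ ρ ∂Pr s σ, ρ ∈ Cyl (s :: l) := by
  have := hPr.1 s σ
  exact (mem_ae_iff_prob_eq_one (measurableSet_cyl _)).2 ((hPr.2 s σ l).trans hl)

lemma ae_zero_eq (hPr : IsPlayMeasure δ Pr) (s : S) (σ : List S → PMF A) :
    ∀ᵐ ρ ∂Pr s σ, ρ 0 = s := by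
  filter_upwards [hPr.ae_mem_cyl_of_listProb_eq_one (s := s) (σ := σ) (l := []) rfl] with ρ hρ
  exact hρ ⟨0, Nat.one_pos⟩

lemma ae_step [Countable S] (hPr : IsPlayMeasure δ Pr) (s : S) (σ : List S → PMF A) :
    ∀ᵐ ρ ∂Pr s σ, ∀ n, Step δ (ρ n) (ρ (n + 1)) := by
  filter_upwards [hPr.ae_zero_eq s σ, hPr.ae_listProb_ne_zero s σ] with ρ hzero hpos n
  subst hzero
  have hmem : ρ ∈ Cyl (ρ 0 :: (List.range' 1 (n + 1)).map ρ) := by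
    rw [cons_map_range', mem_cyl_map_range]
    exact fun _ _ => rfl
  have hchain := isChain_step_of_listProb_ne_zero (hpos _ hmem)
  rw [cons_map_range', List.isChain_map, List.isChain_range_succ] at hchain
  exact hchain n n.lt_succ_self

lemma ae_openLoop_eq (hPr : IsPlayMeasure δ Pr) {a : ℕ → A} {ρ : ℕ → S}
    (hstep : ∀ n, δ (ρ n) (a n) = PMF.pure (ρ (n + 1))) :
    ∀ᵐ x ∂Pr (ρ 0) (openLoop a), x = ρ := by
  have hcyl : ∀ᵐ x ∂Pr (ρ 0) (openLoop a), ∀ n, x ∈ Cyl (ρ 0 :: (List.range' 1 n).map ρ) :=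
    ae_all_iff.2 fun n => hPr.ae_mem_cyl_of_listProb_eq_one (listProb_openLoop_eq_one hstep n [])
  filter_upwards [hcyl] with x hx
  funext n
  have hxn := hx n
  rw [cons_map_range', mem_cyl_map_range] at hxn
  exact hxn n n.lt_succ_self

theorem exists_openLoop_eq_one_of_ne_zero [Countable S] (hPr : IsPlayMeasure δ Pr)
    (hdet : ∀ s a, ∃ t, δ s a = PMF.pure t) {s : S} {σ : List S → PMF A} {φ : Set (ℕ → S)}
    (hφ : Pr s σ φ ≠ 0) : ∃ a : ℕ → A, Pr s (openLoop a) φ = 1 := by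
  obtain ⟨ρ, hρφ, rfl, hρ⟩ := ((frequently_ae_mem_iff.2 hφ).and_eventually
    ((hPr.ae_zero_eq s σ).and (hPr.ae_step s σ))).exists
  choose a ha using fun n => exists_eq_pure_of_step hdet (hρ n)
  have := hPr.1 (ρ 0) (openLoop a)
  have hmem : ∀ᵐ x ∂Pr (ρ 0) (openLoop a), x ∈ φ := by
    filter_upwards [hPr.ae_openLoop_eq ha] with x hx
    exact hx ▸ hρφ
  exact ⟨a, (measure_congr (Filter.eventuallyEq_univ.2 hmem)).trans measure_univ⟩

end IsPlayMeasure

theorem stmt_15_general [Countable S] [MeasurableSpace S] [MeasurableSingletonClass S]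
    [Fintype A] {δ : S → A → PMF S} {Pr : S → (List S → PMF A) → Measure (ℕ → S)}
    (hPr : IsPlayMeasure δ Pr) (hdet : ∀ s a, ∃ t, δ s a = PMF.pure t) (obs : S → O)
    (sStar : S) (φ : Set (ℕ → S)) :
    (⨆ σ : {σ : List S → PMF A // ObsBased obs σ}, Pr sStar σ.1 φ) = 0 ∨
      (⨆ σ : {σ : List S → PMF A // ObsBased obs σ}, Pr sStar σ.1 φ) = 1 := by
  by_cases hzero : ∀ σ : {σ : List S → PMF A // ObsBased obs σ}, Pr sStar σ.1 φ = 0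
  · exact .inl (iSup_eq_bot.2 hzero)
  obtain ⟨σ, hσ⟩ := not_forall.1 hzero
  obtain ⟨a, ha⟩ := hPr.exists_openLoop_eq_one_of_ne_zero hdet hσ
  refine .inr (le_antisymm (iSup_le fun τ => ?_) ?_)
  · have := hPr.1 sStar τ.1
    exact prob_le_one
  · rw [← ha]
    exact le_iSup (fun τ : {τ : List S → PMF A // ObsBased obs τ} => Pr sStar τ.1 φ)
      ⟨openLoop a, obsBased_openLoop obs a⟩

theorem stmt_15 {S A O : Type} [Fintype S] [Nonempty S] [Fintype A] [Nonempty A] [Fintype O]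
    [MeasurableSpace S] [DiscreteMeasurableSpace S]
    (δ : S → A → PMF S) (obs : S → O)
    (Pr : S → (List S → PMF A) → Measure (ℕ → S)) (hPr : IsPlayMeasure δ Pr)
    (sStar : S) (φ : Set (ℕ → S)) (hφ : MeasurableSet φ)
    (hdet : ∀ s a, ∃ t, δ s a = PMF.pure t) :
    (⨆ σ : {σ : List S → PMF A // ObsBased obs σ}, Pr sStar σ.1 φ) = 0 ∨
      (⨆ σ : {σ : List S → PMF A // ObsBased obs σ}, Pr sStar σ.1 φ) = 1 :=
  stmt_15_general hPr hdet obs sStar φ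

end Stmt15
end

section
/- Let G = (S, A₁, A₂, δ) be a complete-observation concurrent stochastic game in which every transition probability δ(s,a,b)(t) is a rational number, and let φ ⊆ S^ω be a measurable objective. Then there exist a complete-observation concurrent deterministic game G' = (S', A₁', A₂', δ') with S ⊆ S' and a measurable objective φ' ⊆ S'^ω such that for every s ∈ S: (i) player 1 has an almost-sure winning strategy for φ from s in G if and only if player 1 has an almost-sure winning strategy for φ' from s in G', and likewise for positive winning strategies; (ii) val_G(φ)(s) = val_{G'}(φ')(s); and (iii) player 1 has an optimal strategy for φ from s in G if and only if player 1 has an optimal strategy for φ' from s in G'. -/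
/-!
STATEMENT 16: every complete-observation concurrent stochastic game with rational
transition probabilities reduces to a complete-observation concurrent *deterministic*
game preserving almost-sure/positive winning, values and existence of optimal strategies.
-/

open scoped ENNReal

namespace Stmt16

/-- A complete-observation concurrent stochastic game. -/
structure ConcGame where
  S : Type
  [finS : Fintype S]
  [neS : Nonempty S]
  A₁ : Type
  [finA₁ : Fintype A₁]
  [neA₁ : Nonempty A₁]
  A₂ : Type
  [finA₂ : Fintype A₂]
  [neA₂ : Nonempty A₂]
  δ : S → A₁ → A₂ → PMF S

attribute [instance] ConcGame.finS ConcGame.neS ConcGame.finA₁ ConcGame.neA₁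
  ConcGame.finA₂ ConcGame.neA₂

open MeasureTheory

/-- States carry the discrete σ-algebra. -/
instance (G : ConcGame) : MeasurableSpace G.S := ⊤

/-- The cylinder set of infinite plays extending the finite prefix `l`. -/
def Cyl {α : Type} (l : List α) : Set (ℕ → α) := {ρ | ∀ i : Fin l.length, ρ i.1 = l.get i}

/-- Probability of observing the successive states `rest` after the history `hist ++ [cur]`. -/
noncomputable def listProb (G : ConcGame)
    (σ : List G.S → PMF G.A₁) (π : List G.S → PMF G.A₂) :
    List G.S → G.S → List G.S → ℝ≥0∞
  | _, _, [] => 1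
  | hist, cur, s' :: rest =>
      (∑' a, ∑' b, σ (hist ++ [cur]) a * π (hist ++ [cur]) b * G.δ cur a b s') *
        listProb G σ π (hist ++ [cur]) s' rest

/-- `Pr` is the family of Ionescu–Tulcea play measures of the game `G`. -/
def IsPlayMeasure (G : ConcGame)
    (Pr : G.S → (List G.S → PMF G.A₁) → (List G.S → PMF G.A₂) → Measure (ℕ → G.S)) :
    Prop :=
  (∀ s σ π, IsProbabilityMeasure (Pr s σ π)) ∧
    ∀ s σ π (l : List G.S), Pr s σ π (Cyl (s :: l)) = listProb G σ π [] s l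

/-- A game is deterministic if all its transitions are Dirac distributions. -/
def Deterministic (G : ConcGame) : Prop :=
  ∀ s a b, ∃ t, G.δ s a b = PMF.pure t

/-- A game has rational transition probabilities. -/
def RationalProbs (G : ConcGame) : Prop :=
  ∀ s a b t, ∃ q : ℚ, G.δ s a b t = ENNReal.ofReal (q : ℝ)

/-!
Over a common denominator `N`, every `δ(s, a, b)` is the law of `f s a b k` for a uniform
`k ∈ ℤ/N`. In the deterministic game each player also picks an element of `ℤ/N`, and the successor
is `f s a b (i + j)`. If either player picks uniformly and independently, then `i + j` is uniform
whatever the other does, so that player alone can enforce the transition probabilities of `G`.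
Hence each row of one payoff matrix, player 1 strategies against player 2 strategies, takes only
values of some row of the other, and conversely; sup-inf values, winning and optimality depend on
nothing else.
-/

section Simulation

variable {A B A' B' L : Type*} {v : A → B → L} {v' : A' → B' → L}

/-- `v'` simulates `v`, as payoffs of zero-sum games whose maximizer picks the first argument:
every choice of the maximizer under `v` has a counterpart under `v'` that admits no new outcomes, so
that guarantees on the outcome carry over from `v` to `v'`. -/
def Simulates (v' : A' → B' → L) (v : A → B → L) : Prop :=
  ∀ a, ∃ a', Set.range (v' a') ⊆ Set.range (v a)

lemma Simulates.exists_forall (h : Simulates v' v) (P : L → Prop) :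
    (∃ a, ∀ b, P (v a b)) → ∃ a', ∀ b', P (v' a' b') := by
  rintro ⟨a, ha⟩
  obtain ⟨a', ha'⟩ := h a
  exact ⟨a', Set.forall_mem_range.1 fun x hx => Set.forall_mem_range.2 ha x (ha' hx)⟩

variable [CompleteLattice L]

lemma Simulates.exists_iInf_le (h : Simulates v' v) (a : A) :
    ∃ a', ⨅ b, v a b ≤ ⨅ b', v' a' b' := by
  obtain ⟨a', ha'⟩ := h a
  exact ⟨a', sInf_le_sInf ha'⟩

lemma Simulates.iSup_iInf_le (h : Simulates v' v) : ⨆ a, ⨅ b, v a b ≤ ⨆ a', ⨅ b', v' a' b' :=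
  iSup_mono' h.exists_iInf_le

lemma Simulates.exists_iInf_eq_iSup (h : Simulates v' v)
    (hval : (⨆ a, ⨅ b, v a b) = ⨆ a', ⨅ b', v' a' b') :
    (∃ a, ⨅ b, v a b = ⨆ a₀, ⨅ b, v a₀ b) → ∃ a', ⨅ b', v' a' b' = ⨆ a₀, ⨅ b', v' a₀ b' := by
  rintro ⟨a, ha⟩
  obtain ⟨a', ha'⟩ := h.exists_iInf_le a
  exact ⟨a', le_antisymm (le_iSup (fun a₀ => ⨅ b', v' a₀ b') a') (by rwa [← hval, ← ha])⟩

end Simulation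

section Uniform

lemma exists_card_fiber_eq {K α : Type*} [Fintype K] [Fintype α] (m : α → ℕ)
    (hm : ∑ t, m t = Fintype.card K) : ∃ f : K → α, ∀ t, Nat.card {k // f k = t} = m t := by
  have e : K ≃ Σ t, Fin (m t) := Fintype.equivOfCardEq (by simp [hm])
  refine ⟨fun k => (e k).1, fun t => ?_⟩
  have fiberEquiv : {k // (e k).1 = t} ≃ Fin (m t) :=
    (e.subtypeEquiv fun _ => Iff.rfl).trans (Equiv.sigmaSubtype t)
  simp [Nat.card_congr fiberEquiv]

variable {K α : Type*} [Fintype K] [Nonempty K]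

lemma map_uniformOfFintype_apply (f : K → α) (t : α) :
    (PMF.uniformOfFintype K).map f t = Nat.card {k // f k = t} / Fintype.card K := by
  classical
  simp [PMF.map_apply, tsum_fintype, ← Finset.sum_filter, Fintype.card_subtype, eq_comm,
    div_eq_mul_inv]

lemma map_uniformOfFintype_equiv [Fintype α] [Nonempty α] (e : K ≃ α) :
    (PMF.uniformOfFintype K).map e = PMF.uniformOfFintype α := by
  ext t
  have : Unique {k // e k = t} := ⟨⟨⟨e.symm t, by simp⟩⟩, fun k => Subtype.ext (by simp [← k.2])⟩
  rw [map_uniformOfFintype_apply, Nat.card_unique, PMF.uniformOfFintype_apply, Nat.cast_one,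
    one_div, Fintype.card_congr e]

lemma exists_map_uniformOfFintype_eq [Finite α] (p : PMF α)
    (h : ∀ t, ∃ m : ℕ, Fintype.card K * p t = m) :
    ∃ f : K → α, (PMF.uniformOfFintype K).map f = p := by
  have := Fintype.ofFinite α
  choose m hm using h
  have hsum : ((∑ t, m t : ℕ) : ℝ≥0∞) = Fintype.card K := by
    rw [Nat.cast_sum, ← Finset.sum_congr rfl fun t _ => hm t, ← Finset.mul_sum,
      ← tsum_fintype (L := .unconditional α), p.tsum_coe, mul_one]
  obtain ⟨f, hf⟩ := exists_card_fiber_eq (K := K) m (by exact_mod_cast hsum)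
  refine ⟨f, PMF.ext fun t => ?_⟩
  rw [map_uniformOfFintype_apply, hf, ← hm, mul_comm,
    ENNReal.mul_div_cancel_right (by simp) (ENNReal.natCast_ne_top _)]

/-- The product of `p` with the uniform distribution on `K`. -/
noncomputable def withUniform (K : Type*) [Fintype K] [Nonempty K] (p : PMF α) : PMF (α × K) :=
  p.bind fun a => (PMF.uniformOfFintype K).map (Prod.mk a)

lemma withUniform_bind {β : Type*} (p : PMF α) (g : α × K → PMF β) :
    (withUniform K p).bind g =
      p.bind fun a => (PMF.uniformOfFintype K).bind fun k => g (a, k) := by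
  simp only [withUniform, PMF.bind_bind, PMF.bind_map, Function.comp_def]

end Uniform

section CommonDenominator

lemma exists_common_denominator {ι R : Type*} [Finite ι] [CommSemiring R] (x : ι → R)
    (hx : ∀ i, ∃ d : ℕ, d ≠ 0 ∧ ∃ m : ℕ, d * x i = m) :
    ∃ N : ℕ, N ≠ 0 ∧ ∀ i, ∃ m : ℕ, N * x i = m := by
  have := Fintype.ofFinite ι
  choose d hd m hm using hx
  refine ⟨∏ i, d i, Finset.prod_ne_zero_iff.2 fun i _ => hd i, fun i => ?_⟩
  obtain ⟨c, hc⟩ : d i ∣ ∏ i, d i := Finset.dvd_prod_of_mem d (Finset.mem_univ i)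
  refine ⟨c * m i, ?_⟩
  rw [hc, mul_comm (d i), Nat.cast_mul, mul_assoc, hm, Nat.cast_mul]

lemma ofReal_intCast (n : ℤ) : ENNReal.ofReal n = n.toNat := by
  obtain ⟨m, rfl | rfl⟩ := n.eq_nat_or_neg <;> simp

lemma den_mul_ofReal (q : ℚ) : (q.den : ℝ≥0∞) * ENNReal.ofReal q = q.num.toNat := by
  have hq : (q.den : ℝ) * q = q.num := by exact_mod_cast q.den_mul_eq_num
  rw [← ENNReal.ofReal_natCast, ← ENNReal.ofReal_mul (Nat.cast_nonneg _), hq, ofReal_intCast]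

lemma RationalProbs.exists_common_denominator {G : ConcGame} (hG : RationalProbs G) :
    ∃ N : ℕ, N ≠ 0 ∧ ∀ s a b t, ∃ m : ℕ, N * G.δ s a b t = m := by
  obtain ⟨N, hN, hm⟩ := Stmt16.exists_common_denominator
    (fun x : G.S × G.A₁ × G.A₂ × G.S => G.δ x.1 x.2.1 x.2.2.1 x.2.2.2) fun x => by
      obtain ⟨q, hq⟩ := hG x.1 x.2.1 x.2.2.1 x.2.2.2
      exact ⟨q.den, q.den_ne_zero, q.num.toNat, hq ▸ den_mul_ofReal q⟩
  exact ⟨N, hN, fun s a b t => hm (s, a, b, t)⟩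

end CommonDenominator

section PlayLaw

variable {α : Type}

lemma preimage_frestrictLe_singleton (n : ℕ) (x : Finset.Iic n → α) :
    Preorder.frestrictLe (π := fun _ => α) n ⁻¹' {x} =
      Cyl (List.ofFn fun i : Fin (n + 1) => x ⟨i, Finset.mem_Iic.2 (Nat.lt_succ_iff.1 i.2)⟩) := by
  ext ρ
  simp [Cyl, funext_iff, Fin.forall_iff, -List.ofFn_succ]

variable [MeasurableSpace α] [MeasurableSingletonClass α]

lemma measurableSet_cyl (l : List α) : MeasurableSet (Cyl l) := by
  have hCyl : Cyl l = ⋂ i : Fin l.length, (fun ρ : ℕ → α => ρ i) ⁻¹' {l.get i} := by ext; simp [Cyl]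
  rw [hCyl]
  exact .iInter fun i => measurable_pi_apply _ (measurableSet_singleton _)

lemma measure_ext_of_cyl [Countable α] {μ ν : Measure (ℕ → α)} [IsFiniteMeasure μ]
    (h : ∀ t l, μ (Cyl (t :: l)) = ν (Cyl (t :: l))) : μ = ν := by
  have hfamily := ProbabilityTheory.isProjectiveMeasureFamily_map_restrict (P := μ)
    (X := fun n ρ => ρ n) fun n => (measurable_pi_apply n).aemeasurable
  refine IsProjectiveLimit.unique (fun _ => rfl)
    ((isProjectiveLimit_nat_iff hfamily ν).2 fun n => Measure.ext_of_singleton fun x => ?_)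
  have hcyl : μ (Preorder.frestrictLe n ⁻¹' {x}) = ν (Preorder.frestrictLe n ⁻¹' {x}) := by
    rw [preimage_frestrictLe_singleton, List.ofFn_succ]
    exact h _ _
  have hmap (ρ : Measure (ℕ → α)) :=
    Measure.map_apply (μ := ρ) (Preorder.measurable_frestrictLe n) (measurableSet_singleton x)
  exact (hmap ν).trans (hcyl.symm.trans (hmap μ).symm)

/-- The probability that a process with next-state law `κ hist cur`, after the states `hist`, in
state `cur`, continues from `hist ++ [cur]` with the states in the last argument. -/
noncomputable def pathProb (κ : List α → α → PMF α) : List α → α → List α → ℝ≥0∞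
  | _, _, [] => 1
  | hist, cur, t :: rest => κ hist cur t * pathProb κ (hist ++ [cur]) t rest

/-- `μ` is the law of the play that starts in `s` and draws each next state from `κ hist cur`. -/
structure IsPlayLaw (κ : List α → α → PMF α) (s : α) (μ : Measure (ℕ → α)) : Prop where
  isProbabilityMeasure : IsProbabilityMeasure μ
  cyl : ∀ l, μ (Cyl (s :: l)) = pathProb κ [] s l

variable {κ : List α → α → PMF α} {s : α} {μ ν : Measure (ℕ → α)}

lemma IsPlayLaw.cyl_eq_zero (hμ : IsPlayLaw κ s μ) {t : α} (hts : t ≠ s) (l : List α) :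
    μ (Cyl (t :: l)) = 0 := by
  have := hμ.isProbabilityMeasure
  have hsub : Cyl (t :: l) ⊆ (Cyl [s])ᶜ := fun ρ ht hs =>
    hts ((ht ⟨0, by simp⟩).symm.trans (hs ⟨0, by simp⟩))
  exact measure_mono_null hsub ((prob_compl_eq_zero_iff (measurableSet_cyl _)).2 (hμ.cyl []))

lemma IsPlayLaw.unique [Countable α] (hμ : IsPlayLaw κ s μ) (hν : IsPlayLaw κ s ν) : μ = ν := by
  have := hμ.isProbabilityMeasure
  have := hν.isProbabilityMeasure
  refine measure_ext_of_cyl fun t l => ?_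
  by_cases hts : t = s
  · rw [hts, hμ.cyl, hν.cyl]
  · rw [hμ.cyl_eq_zero hts, hν.cyl_eq_zero hts]

end PlayLaw

instance (G : ConcGame) : DiscreteMeasurableSpace G.S := ⟨fun _ => trivial⟩

/-- The law of the next state after `hist ++ [cur]` when the players follow `σ` and `π`. -/
noncomputable def ConcGame.step (G : ConcGame) (σ : List G.S → PMF G.A₁) (π : List G.S → PMF G.A₂)
    (hist : List G.S) (cur : G.S) : PMF G.S :=
  (σ (hist ++ [cur])).bind fun a => (π (hist ++ [cur])).bind fun b => G.δ cur a b

lemma listProb_eq_pathProb (G : ConcGame) (σ : List G.S → PMF G.A₁) (π : List G.S → PMF G.A₂)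
    (hist : List G.S) (cur : G.S) (l : List G.S) :
    listProb G σ π hist cur l = pathProb (G.step σ π) hist cur l := by
  induction l generalizing hist cur with
  | nil => rfl
  | cons t l ih =>
    simp only [listProb, pathProb, ih, ConcGame.step, PMF.bind_apply, ← ENNReal.tsum_mul_left,
      mul_assoc]

lemma IsPlayMeasure.isPlayLaw {G : ConcGame}
    {Pr : G.S → (List G.S → PMF G.A₁) → (List G.S → PMF G.A₂) → Measure (ℕ → G.S)}
    (hPr : IsPlayMeasure G Pr) (s : G.S) (σ : List G.S → PMF G.A₁) (π : List G.S → PMF G.A₂) :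
    IsPlayLaw (G.step σ π) s (Pr s σ π) :=
  ⟨hPr.1 s σ π, fun l => (hPr.2 s σ π l).trans (listProb_eq_pathProb G σ π [] s l)⟩

section UniformSampler

variable {G : ConcGame} {K : Type} [Fintype K] [Nonempty K] {f : G.S → G.A₁ → G.A₂ → K → G.S}

/-- `f` samples the transitions of `G` from a seed: the image of the uniform distribution on the
seeds `K` under `f s a b` is `G.δ s a b`. -/
def IsUniformSampler (G : ConcGame) (f : G.S → G.A₁ → G.A₂ → K → G.S) : Prop :=
  ∀ s a b, (PMF.uniformOfFintype K).map (f s a b) = G.δ s a b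

lemma RationalProbs.exists_isUniformSampler (hG : RationalProbs G) :
    ∃ (N : ℕ) (_ : NeZero N) (f : G.S → G.A₁ → G.A₂ → ZMod N → G.S), IsUniformSampler G f := by
  obtain ⟨N, hN, hm⟩ := hG.exists_common_denominator
  have : NeZero N := ⟨hN⟩
  choose f hf using fun s a b =>
    exists_map_uniformOfFintype_eq (K := ZMod N) (G.δ s a b) (by simpa using hm s a b)
  exact ⟨N, ‹_›, f, hf⟩

lemma IsUniformSampler.bind_pure_equiv (hf : IsUniformSampler G f) (e : K ≃ K)
    (s : G.S) (a : G.A₁) (b : G.A₂) :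
    ((PMF.uniformOfFintype K).bind fun k => PMF.pure (f s a b (e k))) = G.δ s a b := by
  calc (PMF.uniformOfFintype K).bind (PMF.pure ∘ f s a b ∘ e)
      = ((PMF.uniformOfFintype K).map e).map (f s a b) := by rw [PMF.bind_pure_comp, PMF.map_comp]
    _ = G.δ s a b := by rw [map_uniformOfFintype_equiv, hf]

/-- The deterministic game in which each player also picks an element of `K`, and the sum of the
two picks is the seed from which `f` computes the successor. -/
noncomputable abbrev ConcGame.derandomize [Add K] (G : ConcGame)
    (f : G.S → G.A₁ → G.A₂ → K → G.S) : ConcGame where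
  S := G.S
  A₁ := G.A₁ × K
  A₂ := G.A₂ × K
  δ s x y := PMF.pure (f s x.1 y.1 (x.2 + y.2))

end UniformSampler

section Derandomize

variable {G : ConcGame} {K : Type} [Fintype K] [AddGroup K] {f : G.S → G.A₁ → G.A₂ → K → G.S}

lemma IsUniformSampler.step_withUniform_left (hf : IsUniformSampler G f)
    (σ : List G.S → PMF G.A₁) (π : List G.S → PMF (G.A₂ × K)) :
    (G.derandomize f).step (fun h => withUniform K (σ h)) π =
      G.step σ (fun h => (π h).map Prod.fst) := by
  funext hist cur
  simp only [ConcGame.step, withUniform_bind, PMF.bind_map, Function.comp_def]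
  refine congrArg _ (funext fun a => ?_)
  rw [PMF.bind_comm]
  exact congrArg _ (funext fun y => hf.bind_pure_equiv (Equiv.addRight y.2) cur a y.1)

lemma IsUniformSampler.step_withUniform_right (hf : IsUniformSampler G f)
    (σ : List G.S → PMF (G.A₁ × K)) (π : List G.S → PMF G.A₂) :
    (G.derandomize f).step σ (fun h => withUniform K (π h)) =
      G.step (fun h => (σ h).map Prod.fst) π := by
  funext hist cur
  simp only [ConcGame.step, withUniform_bind, PMF.bind_map, Function.comp_def]
  exact congrArg _ (funext fun x => congrArg _ (funext fun b =>
    hf.bind_pure_equiv (Equiv.addLeft x.2) cur x.1 b))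

variable {Pr : G.S → (List G.S → PMF G.A₁) → (List G.S → PMF G.A₂) → Measure (ℕ → G.S)}
  {Pr' : G.S → (List G.S → PMF (G.A₁ × K)) → (List G.S → PMF (G.A₂ × K)) → Measure (ℕ → G.S)}

lemma IsUniformSampler.derandomize_simulates (hf : IsUniformSampler G f)
    (hPr : IsPlayMeasure G Pr) (hPr' : IsPlayMeasure (G.derandomize f) Pr')
    (s : G.S) (φ : Set (ℕ → G.S)) :
    Simulates (fun σ' π' => Pr' s σ' π' φ) (fun σ π => Pr s σ π φ) := by
  refine fun σ => ⟨fun h => withUniform K (σ h), Set.range_subset_iff.2 fun π' => ?_⟩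
  have hlaw' := hPr'.isPlayLaw s (fun h => withUniform K (σ h)) π'
  rw [hf.step_withUniform_left] at hlaw'
  exact ⟨fun h => (π' h).map Prod.fst, congrArg (· φ) ((hPr.isPlayLaw s _ _).unique hlaw')⟩

lemma IsUniformSampler.simulates_derandomize (hf : IsUniformSampler G f)
    (hPr : IsPlayMeasure G Pr) (hPr' : IsPlayMeasure (G.derandomize f) Pr')
    (s : G.S) (φ : Set (ℕ → G.S)) :
    Simulates (fun σ π => Pr s σ π φ) (fun σ' π' => Pr' s σ' π' φ) := by
  refine fun σ' => ⟨fun h => (σ' h).map Prod.fst, Set.range_subset_iff.2 fun π => ?_⟩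
  have hlaw' := hPr'.isPlayLaw s σ' (fun h => withUniform K (π h))
  rw [hf.step_withUniform_right] at hlaw'
  exact ⟨fun h => withUniform K (π h), congrArg (· φ) (hlaw'.unique (hPr.isPlayLaw s _ _))⟩

end Derandomize

theorem stmt_16 (G : ConcGame) (hrat : RationalProbs G)
    (φ : Set (ℕ → G.S)) (hφ : MeasurableSet φ) :
    ∃ (G' : ConcGame) (ι : G.S → G'.S) (φ' : Set (ℕ → G'.S)),
      Function.Injective ι ∧ Deterministic G' ∧ MeasurableSet φ' ∧
      ∀ Pr, IsPlayMeasure G Pr → ∀ Pr', IsPlayMeasure G' Pr' →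
        ∀ s : G.S,
          ((∃ σ, ∀ π, Pr s σ π φ = 1) ↔ (∃ σ', ∀ π', Pr' (ι s) σ' π' φ' = 1)) ∧
          ((∃ σ, ∀ π, 0 < Pr s σ π φ) ↔ (∃ σ', ∀ π', 0 < Pr' (ι s) σ' π' φ')) ∧
          ((⨆ σ, ⨅ π, Pr s σ π φ) = ⨆ σ', ⨅ π', Pr' (ι s) σ' π' φ') ∧
          ((∃ σ, (⨅ π, Pr s σ π φ) = ⨆ σ'', ⨅ π, Pr s σ'' π φ) ↔
            (∃ σ', (⨅ π', Pr' (ι s) σ' π' φ') = ⨆ σ'', ⨅ π', Pr' (ι s) σ'' π' φ')) := by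
  obtain ⟨N, _, f, hf⟩ := hrat.exists_isUniformSampler
  refine ⟨G.derandomize f, id, φ, Function.injective_id, fun s a b => ⟨_, rfl⟩, hφ, ?_⟩
  intro Pr hPr Pr' hPr' s
  have hsim := hf.derandomize_simulates hPr hPr' s φ
  have hsim' := hf.simulates_derandomize hPr hPr' s φ
  have hval := le_antisymm hsim.iSup_iInf_le hsim'.iSup_iInf_le
  exact ⟨⟨hsim.exists_forall (· = 1), hsim'.exists_forall (· = 1)⟩,
    ⟨hsim.exists_forall (0 < ·), hsim'.exists_forall (0 < ·)⟩, hval,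
    ⟨hsim.exists_iInf_eq_iSup hval, hsim'.exists_iInf_eq_iSup hval.symm⟩⟩

end Stmt16
end

section
/- Let G be a one-sided complete-observation turn-based stochastic game in which every transition probability is a rational number, and let φ ⊆ S^ω be a measurable objective. Then there exist a one-sided complete-observation turn-based deterministic game G' whose state space S' contains S and a measurable objective φ' ⊆ S'^ω such that for every s ∈ S: (i) player 1 has an observation-based almost-sure winning strategy for φ from s in G if and only if player 1 has an observation-based almost-sure winning strategy for φ' from s in G', and likewise for positive winning strategies; (ii) val^G(φ)(s) = val^{G'}(φ')(s); and (iii) player 1 has an observation-based optimal strategy for φ from s in G if and only if player 1 has an observation-based optimal strategy for φ' from s in G'. -/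
/-!
STATEMENT 17: every one-sided complete-observation turn-based stochastic game with
rational transition probabilities reduces to a one-sided complete-observation turn-based
*deterministic* game preserving observation-based almost-sure/positive winning, values
and existence of observation-based optimal strategies.
-/

open scoped ENNReal

namespace Stmt17

/-- A one-sided complete-observation turn-based stochastic game: states with
`turn = true` belong to player 1, the others to player 2; player 2 observes states
completely while player 1 only observes `obs₁`. -/
structure OsTGame where
  S : Type
  [finS : Fintype S]
  [neS : Nonempty S]
  turn : S → Bool
  A₁ : Type
  [finA₁ : Fintype A₁]
  [neA₁ : Nonempty A₁]
  A₂ : Type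
  [finA₂ : Fintype A₂]
  [neA₂ : Nonempty A₂]
  O : Type
  [finO : Fintype O]
  δ₁ : S → A₁ → PMF S
  δ₂ : S → A₂ → PMF S
  obs₁ : S → O

attribute [instance] OsTGame.finS OsTGame.neS OsTGame.finA₁ OsTGame.neA₁
  OsTGame.finA₂ OsTGame.neA₂ OsTGame.finO

open MeasureTheory

/-- States carry the discrete σ-algebra. -/
instance (G : OsTGame) : MeasurableSpace G.S := ⊤

/-- The cylinder set of infinite plays extending the finite prefix `l`. -/
def Cyl {α : Type} (l : List α) : Set (ℕ → α) := {ρ | ∀ i : Fin l.length, ρ i.1 = l.get i}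

/-- One-step transition probability of the turn-based game. -/
noncomputable def step (G : OsTGame) (σ : List G.S → PMF G.A₁) (π : List G.S → PMF G.A₂)
    (hist : List G.S) (cur next : G.S) : ℝ≥0∞ :=
  if G.turn cur then ∑' a, σ (hist ++ [cur]) a * G.δ₁ cur a next
  else ∑' b, π (hist ++ [cur]) b * G.δ₂ cur b next

/-- Probability of observing the successive states `rest` after the history `hist ++ [cur]`. -/
noncomputable def listProb (G : OsTGame)
    (σ : List G.S → PMF G.A₁) (π : List G.S → PMF G.A₂) :
    List G.S → G.S → List G.S → ℝ≥0∞
  | _, _, [] => 1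
  | hist, cur, s' :: rest =>
      step G σ π hist cur s' * listProb G σ π (hist ++ [cur]) s' rest

/-- `Pr` is the family of Ionescu–Tulcea play measures of the game `G`. -/
def IsPlayMeasure (G : OsTGame)
    (Pr : G.S → (List G.S → PMF G.A₁) → (List G.S → PMF G.A₂) → Measure (ℕ → G.S)) :
    Prop :=
  (∀ s σ π, IsProbabilityMeasure (Pr s σ π)) ∧
    ∀ s σ π (l : List G.S), Pr s σ π (Cyl (s :: l)) = listProb G σ π [] s l

/-- An observation-based strategy of player 1 only depends on the observation sequence. -/
def ObsBased (G : OsTGame) (σ : List G.S → PMF G.A₁) : Prop :=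
  ∀ h h' : List G.S, h.map G.obs₁ = h'.map G.obs₁ → σ h = σ h'

/-- A game is deterministic if all its transitions are Dirac distributions. -/
def Deterministic (G : OsTGame) : Prop :=
  (∀ s a, ∃ t, G.δ₁ s a = PMF.pure t) ∧ (∀ s b, ∃ t, G.δ₂ s b = PMF.pure t)

/-- A game has rational transition probabilities. -/
def RationalProbs (G : OsTGame) : Prop :=
  (∀ s a t, ∃ q : ℚ, G.δ₁ s a t = ENNReal.ofReal (q : ℝ)) ∧
    (∀ s b t, ∃ q : ℚ, G.δ₂ s b t = ENNReal.ofReal (q : ℝ))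

/-- The value for player 1: sup over observation-based strategies of player 1 of the inf
over all strategies of player 2. -/
noncomputable def val (G : OsTGame)
    (Pr : G.S → (List G.S → PMF G.A₁) → (List G.S → PMF G.A₂) → Measure (ℕ → G.S))
    (φ : Set (ℕ → G.S)) (s : G.S) : ℝ≥0∞ :=
  ⨆ σ : {σ : List G.S → PMF G.A₁ // ObsBased G σ},
    ⨅ π : List G.S → PMF G.A₂, Pr s σ.1 π φ

/-!
A single random move can be replaced by a joint draw: if the players choose elements `i` and `j` of
a finite group, then `i + j` is uniform as soon as one of them draws uniformly and independently of
the other, and by rationality all transitions of `G` can be sampled from one such uniform element.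
So in each round of the deterministic game player 2 first commits to an action and to `j`, which
player 1 does not observe, and then player 1 chooses an action and `i`; each player can secure the
transition probabilities of `G` alone.

When player 1 lifts a strategy of `G`, player 2 may correlate its choices with its own commitments
and with the choices of player 1 in previous rounds. Given the underlying history of `G`, however,
the commitment of player 2 has a conditional law, and its marginal on the actions is a strategy in
`G` that produces the same law of plays. Conversely player 2 lifts a strategy by drawing `j`
uniformly, and player 1, who observes nothing of the commitments, plays in `G` by simulating
arbitrary ones. Laws of plays are compared on cylinders.
-/

section Cylinders

variable {α : Type} {ρ : ℕ → α}

/-- The list of the first `n` states of the play `ρ`. -/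
def history (ρ : ℕ → α) (n : ℕ) : List α := (List.range n).map ρ

@[simp] theorem length_history (n : ℕ) : (history ρ n).length = n := by simp [history]

theorem history_succ (n : ℕ) : history ρ (n + 1) = history ρ n ++ [ρ n] := by
  simp [history, List.range_succ]

theorem history_eq_iff {ρ' : ℕ → α} {n : ℕ} :
    history ρ n = history ρ' n ↔ ∀ i < n, ρ i = ρ' i := by
  simp [history]

theorem mem_Cyl_iff {l : List α} : ρ ∈ Cyl l ↔ history ρ l.length = l := by
  refine ⟨fun h => List.ext_get (by simp) fun i _ hi => ?_, fun h i => ?_⟩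
  · simpa [history] using h ⟨i, hi⟩
  · simp only [List.get_eq_getElem]
    conv_rhs => rw [← List.getElem_of_eq h (by simp)]
    simp [history]

theorem mem_Cyl_history (n : ℕ) : ρ ∈ Cyl (history ρ n) := by simp [mem_Cyl_iff]

theorem Cyl_concat (l : List α) (x : α) : Cyl (l ++ [x]) = Cyl l ∩ {ρ | ρ l.length = x} := by
  ext ρ
  simp [mem_Cyl_iff, history_succ]

theorem mem_Cyl_concat_iff {l : List α} {x : α} :
    ρ ∈ Cyl (l ++ [x]) ↔ history ρ l.length = l ∧ ρ l.length = x := by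
  simp [mem_Cyl_iff, history_succ]

theorem Cyl_subset_coord_zero (x : α) (l : List α) : Cyl (x :: l) ⊆ {ρ | ρ 0 = x} :=
  fun _ hρ => hρ ⟨0, by simp⟩

theorem pairwiseDisjoint_Cyl (n : ℕ) : {l : List α | l.length = n}.PairwiseDisjoint Cyl := by
  rintro l rfl l' hl' hne
  refine Set.disjoint_left.2 fun ρ h h' => hne ?_
  rw [← mem_Cyl_iff.1 h, ← hl', mem_Cyl_iff.1 h']

theorem Cyl_subset_of_length_le {l l' : List α} (hl : ρ ∈ Cyl l) (hl' : ρ ∈ Cyl l')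
    (h : l.length ≤ l'.length) : Cyl l' ⊆ Cyl l := by
  intro ρ' hρ'
  rw [mem_Cyl_iff] at *
  rw [← hl', length_history, history_eq_iff] at hρ'
  rw [← hl, length_history, history_eq_iff]
  exact fun i hi => hρ' i (hi.trans_le h)

theorem isPiSystem_range_Cyl : IsPiSystem (Set.range (Cyl (α := α))) := by
  rintro _ ⟨l, rfl⟩ _ ⟨l', rfl⟩ ⟨ρ, hl, hl'⟩
  rcases le_total l.length l'.length with h | h
  · exact ⟨l', (Set.inter_eq_right.2 (Cyl_subset_of_length_le hl hl' h)).symm⟩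
  · exact ⟨l, (Set.inter_eq_left.2 (Cyl_subset_of_length_le hl' hl h)).symm⟩

theorem eq_biUnion_Cyl_of_dependsOn {n : ℕ} {E : Set (ℕ → α)}
    (hE : DependsOn (· ∈ E) (Set.Iio n)) : E = ⋃ l ∈ (history · n) '' E, Cyl l := by
  ext ρ
  simp only [Set.biUnion_image, Set.mem_iUnion, mem_Cyl_iff, length_history, history_eq_iff,
    exists_prop]
  exact ⟨fun h => ⟨ρ, h, fun _ _ => rfl⟩, fun ⟨_, h, heq⟩ => (hE heq).mpr h⟩

variable [MeasurableSpace α]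

theorem measurableSet_coord [DiscreteMeasurableSpace α] (n : ℕ) (B : Set α) :
    MeasurableSet {ρ : ℕ → α | ρ n ∈ B} :=
  measurable_pi_apply n (.of_discrete (s := B))

theorem measurableSet_Cyl [MeasurableSingletonClass α] (l : List α) : MeasurableSet (Cyl l) := by
  simp only [Cyl, Set.ofPred_forall]
  exact .iInter fun i =>
    measurable_pi_apply (X := fun _ => α) i.1 (measurableSet_singleton (l.get i))

theorem measurableSet_of_dependsOn [Countable α] [MeasurableSingletonClass α] {n : ℕ}
    {E : Set (ℕ → α)} (hE : DependsOn (· ∈ E) (Set.Iio n)) : MeasurableSet E := by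
  rw [eq_biUnion_Cyl_of_dependsOn hE]
  exact .biUnion (Set.to_countable _) fun l _ => measurableSet_Cyl l

theorem generateFrom_range_Cyl [Countable α] [MeasurableSingletonClass α] :
    MeasurableSpace.generateFrom (Set.range (Cyl (α := α))) = MeasurableSpace.pi := by
  refine le_antisymm (MeasurableSpace.generateFrom_le ?_) (iSup_le fun n => ?_)
  · rintro _ ⟨l, rfl⟩
    exact measurableSet_Cyl l
  · refine (@measurable_to_countable' α (ℕ → α) _ _ (.generateFrom _) _ fun x => ?_).comap_le
    have coord_eq_iUnion : (fun ρ : ℕ → α => ρ n) ⁻¹' {x} =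
        ⋃ l ∈ {l : List α | l.length = n}, Cyl (l ++ [x]) := by
      ext ρ
      simp only [Cyl_concat, Set.mem_iUnion]
      constructor
      · exact fun h => ⟨history ρ n, length_history n, mem_Cyl_history n, by simpa using h⟩
      · rintro ⟨l, rfl, -, h⟩
        exact h
    rw [coord_eq_iUnion]
    exact .biUnion (Set.to_countable _) fun l _ =>
      MeasurableSpace.measurableSet_generateFrom ⟨_, rfl⟩

theorem measure_ext_of_Cyl [Countable α] [MeasurableSingletonClass α] {μ ν : Measure (ℕ → α)}
    [IsFiniteMeasure μ] (h : ∀ l, μ (Cyl l) = ν (Cyl l)) : μ = ν := by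
  refine ext_of_generate_finite _ generateFrom_range_Cyl.symm isPiSystem_range_Cyl
    (by rintro _ ⟨l, rfl⟩; exact h l) ?_
  have Cyl_nil : Cyl ([] : List α) = Set.univ := Set.eq_univ_of_forall fun _ i => i.elim0
  rw [← Cyl_nil, h]

end Cylinders

section ProcessLaw

variable {α : Type} [MeasurableSpace α]

/-- `μ` is the law of a process started in `x₀` that moves from `x` to `y` with probability
`κ h x y` whenever the states visited before `x` form the list `h`. -/
structure IsProcessLaw (κ : List α → α → α → ℝ≥0∞) (x₀ : α) (μ : Measure (ℕ → α)) : Prop where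
  isProbabilityMeasure : IsProbabilityMeasure μ
  ae_start : ∀ᵐ ρ ∂μ, ρ 0 = x₀
  measure_Cyl_concat : ∀ h x y,
    μ (Cyl (h ++ [x] ++ [y])) = μ (Cyl (h ++ [x])) * κ h x y

namespace IsProcessLaw

variable {κ : List α → α → α → ℝ≥0∞} {x₀ : α} {μ ν : Measure (ℕ → α)}

theorem measure_Cyl_singleton (hμ : IsProcessLaw κ x₀ μ) (x : α) :
    μ (Cyl [x]) = (PMF.pure x₀) x := by
  have := hμ.isProbabilityMeasure
  have Cyl_ae_eq : Cyl [x] =ᵐ[μ] {_ρ | x = x₀} := by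
    filter_upwards [hμ.ae_start] with ρ hρ
    refine propext (?_ : ρ ∈ Cyl [x] ↔ x = x₀)
    simp [mem_Cyl_iff, history, hρ, eq_comm]
  rw [measure_congr Cyl_ae_eq, PMF.pure_apply]
  split_ifs with h <;> simp [h]

theorem unique [Countable α] [MeasurableSingletonClass α] (hμ : IsProcessLaw κ x₀ μ)
    (hν : IsProcessLaw κ x₀ ν) : μ = ν := by
  have := hμ.isProbabilityMeasure
  have := hν.isProbabilityMeasure
  refine measure_ext_of_Cyl fun l => ?_
  induction l using List.reverseRecOn with
  | nil => simp [Cyl]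
  | append_singleton l y ih =>
    rcases List.eq_nil_or_concat' l with rfl | ⟨h, x, rfl⟩
    · simp only [List.nil_append, hμ.measure_Cyl_singleton, hν.measure_Cyl_singleton]
    · rw [hμ.measure_Cyl_concat, hν.measure_Cyl_concat, ih]

variable [Countable α] [DiscreteMeasurableSpace α]

theorem measure_inter_eq_setLIntegral (hμ : IsProcessLaw κ x₀ μ) {n : ℕ} {E : Set (ℕ → α)}
    (hE : DependsOn (· ∈ E) (Set.Iio (n + 1))) (y : α) :
    μ (E ∩ {ρ | ρ (n + 1) = y}) = ∫⁻ ρ in E, κ (history ρ n) (ρ n) y ∂μ := by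
  let L : Set (List α) := (history · (n + 1)) '' E
  have hL : L ⊆ {l | l.length = n + 1} := by
    rintro _ ⟨ρ, -, rfl⟩
    exact length_history _
  have E_eq : E = ⋃ l ∈ L, Cyl l := eq_biUnion_Cyl_of_dependsOn hE
  have inter_eq : E ∩ {ρ | ρ (n + 1) = y} = ⋃ l ∈ L, Cyl (l ++ [y]) := by
    rw [E_eq, Set.iUnion₂_inter]
    exact Set.iUnion₂_congr fun l hl => by rw [Cyl_concat, hL hl]
  rw [inter_eq, E_eq, measure_biUnion L.to_countable, lintegral_biUnion L.to_countable]
  · refine tsum_congr fun ⟨l, ρ₀, _, hl⟩ => ?_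
    obtain rfl : history ρ₀ n ++ [ρ₀ n] = l := (history_succ n).symm.trans hl
    rw [hμ.measure_Cyl_concat, mul_comm, ← setLIntegral_const]
    refine setLIntegral_congr_fun (measurableSet_Cyl _) fun ρ hρ => ?_
    rw [← history_succ, mem_Cyl_iff, length_history, history_eq_iff] at hρ
    rw [hρ n n.lt_succ_self, history_eq_iff.2 fun i hi => hρ i (hi.trans n.lt_succ_self)]
  · exact fun l _ => measurableSet_Cyl l
  · exact (pairwiseDisjoint_Cyl _).subset hL
  · refine ((pairwiseDisjoint_Cyl _).subset hL).mono fun l => ?_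
    rw [Cyl_concat]
    exact Set.inter_subset_left
  · exact fun l _ => measurableSet_Cyl _

theorem ae_transition_ne_zero (hμ : IsProcessLaw κ x₀ μ) :
    ∀ᵐ ρ ∂μ, ∀ n, κ (history ρ n) (ρ n) (ρ (n + 1)) ≠ 0 := by
  refine ae_all_iff.2 fun n => ?_
  let E (y : α) : Set (ℕ → α) := {ρ | κ (history ρ n) (ρ n) y = 0}
  have dependsOn_E (y : α) : DependsOn (· ∈ E y) (Set.Iio (n + 1)) := fun ρ ρ' h => by
    simp only [E, Set.mem_ofPred_eq, h n n.lt_succ_self,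
      history_eq_iff.2 fun i hi => h i (Nat.lt_succ_of_lt hi)]
  have null (y : α) : μ (E y ∩ {ρ | ρ (n + 1) = y}) = 0 := by
    rw [hμ.measure_inter_eq_setLIntegral (dependsOn_E y)]
    exact setLIntegral_eq_zero (measurableSet_of_dependsOn (dependsOn_E y)) fun ρ hρ => hρ
  refine measure_mono_null (fun ρ hρ => ?_) (measure_iUnion_null null)
  exact Set.mem_iUnion.2 ⟨ρ (n + 1), not_not.1 hρ, rfl⟩

end IsProcessLaw

end ProcessLaw

section CondLaw

variable {Ω β : Type*} [MeasurableSpace Ω] {μ : Measure Ω} {E : Set Ω} {X : Ω → β}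

/-- `p` is a conditional distribution of `X` given the event `E` under `μ`; when `μ E = 0`, every
`p` qualifies. -/
def IsCondLaw (μ : Measure Ω) (E : Set Ω) (X : Ω → β) (p : PMF β) : Prop :=
  ∀ b, μ (E ∩ X ⁻¹' {b}) = μ E * p b

theorem exists_isCondLaw [IsFiniteMeasure μ] [Countable β] [Nonempty β] (hE : MeasurableSet E)
    (hX : ∀ b, MeasurableSet (X ⁻¹' {b})) : ∃ p, IsCondLaw μ E X p := by
  by_cases h0 : μ E = 0
  · refine ⟨PMF.pure (Classical.arbitrary β), fun b => ?_⟩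
    rw [h0, zero_mul, measure_inter_null_of_null_left _ h0]
  · let _ : MeasurableSpace β := ⊤
    have : DiscreteMeasurableSpace β := ⟨fun _ => trivial⟩
    have X_measurable : Measurable X := measurable_to_countable' hX
    have := ProbabilityTheory.cond_isProbabilityMeasure h0
    have := Measure.isProbabilityMeasure_map (μ := ProbabilityTheory.cond μ E)
      X_measurable.aemeasurable
    refine ⟨((ProbabilityTheory.cond μ E).map X).toPMF, fun b => ?_⟩
    rw [Measure.toPMF_apply, Measure.map_apply X_measurable (measurableSet_singleton b), mul_comm,
      ProbabilityTheory.cond_mul_eq_inter hE]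

theorem IsCondLaw.setLIntegral_comp [Countable β] {p : PMF β} (hp : IsCondLaw μ E X p)
    (hX : ∀ b, MeasurableSet (X ⁻¹' {b})) (f : β → ℝ≥0∞) :
    ∫⁻ ω in E, f (X ω) ∂μ = μ E * ∑' b, p b * f b := by
  let _ : MeasurableSpace β := ⊤
  have : DiscreteMeasurableSpace β := ⟨fun _ => trivial⟩
  have X_measurable : Measurable X := measurable_to_countable' hX
  calc ∫⁻ ω in E, f (X ω) ∂μ
      = ∑' b, f b * (μ.restrict E).map X {b} := by
        rw [← lintegral_countable', lintegral_map (measurable_of_countable f) X_measurable]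
    _ = ∑' b, μ E * (p b * f b) := by
        refine tsum_congr fun b => ?_
        rw [Measure.map_apply X_measurable (measurableSet_singleton b),
          Measure.restrict_apply (hX b), Set.inter_comm, hp, mul_left_comm, mul_comm (f b)]
    _ = μ E * ∑' b, p b * f b := ENNReal.tsum_mul_left

end CondLaw

section UniformSampling

theorem map_apply_of_injective {α β : Type*} {f : α → β} (hf : Function.Injective f) (p : PMF α)
    (a : α) : p.map f (f a) = p a := by
  classical
  simp [PMF.map_apply, hf.eq_iff]

theorem map_equiv_uniformOfFintype {α β : Type*} [Fintype α] [Nonempty α] [Fintype β] [Nonempty β]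
    (e : α ≃ β) : (PMF.uniformOfFintype α).map e = PMF.uniformOfFintype β := by
  ext b
  obtain ⟨a, rfl⟩ := e.surjective b
  rw [map_apply_of_injective e.injective]
  simp [Fintype.card_congr e]

theorem map_uniformOfFintype_apply {α β : Type*} [Fintype α] [Nonempty α] (f : α → β) (b : β) :
    (PMF.uniformOfFintype α).map f b = Nat.card {a // f a = b} / Fintype.card α := by
  classical
  simp [PMF.map_apply, tsum_fintype, Finset.sum_ite, Fintype.card_subtype, ENNReal.div_eq_inv_mul,
    mul_comm, eq_comm]

theorem exists_eq_natCast_div_of_rational {ι : Type*} [Finite ι] {p : ι → ℝ≥0∞}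
    (hp : ∀ i, ∃ q : ℚ, p i = ENNReal.ofReal q) :
    ∃ N : ℕ, N ≠ 0 ∧ ∃ m : ι → ℕ, ∀ i, p i = m i / N := by
  have := Fintype.ofFinite ι
  choose q hq using hp
  have p_eq (i : ι) : p i = (q i).num.toNat / (q i).den := by
    rw [hq, Rat.cast_def, ENNReal.ofReal_div_of_pos (by exact_mod_cast (q i).den_pos),
      ENNReal.ofReal_natCast]
    rcases (q i).num with n | n
    · simp
    · simpa using (neg_one_lt_zero.le.trans n.cast_nonneg : (-1 : ℝ) ≤ n)
  have den_ne_zero : ∏ i, (q i).den ≠ 0 := Finset.prod_ne_zero_iff.2 fun i _ => (q i).den_nz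
  choose c hc using fun i => Finset.dvd_prod_of_mem (fun i => (q i).den) (Finset.mem_univ i)
  refine ⟨∏ i, (q i).den, den_ne_zero, fun i => (q i).num.toNat * c i, fun i => ?_⟩
  have c_ne_zero : c i ≠ 0 := right_ne_zero_of_mul (hc i ▸ den_ne_zero)
  rw [p_eq, hc i]
  push_cast
  exact (ENNReal.mul_div_mul_right _ _ (by simpa) (by simp)).symm

theorem exists_map_uniformOfFintype_eq {S : Type*} [Finite S] (p : PMF S) {N : ℕ} [NeZero N]
    {m : S → ℕ} (hm : ∀ t, p t = m t / N) :
    ∃ f : Fin N → S, (PMF.uniformOfFintype (Fin N)).map f = p := by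
  have := Fintype.ofFinite S
  have sum_m : ∑ t, m t = N := by
    have sum_div_eq_one : (∑ t, (m t : ℝ≥0∞)) / N = 1 := by
      simp only [← p.tsum_coe, tsum_fintype, hm, div_eq_mul_inv, Finset.sum_mul]
    rw [ENNReal.div_eq_one_iff (by simp [NeZero.ne]) (by simp)] at sum_div_eq_one
    exact_mod_cast sum_div_eq_one
  let e : Fin N ≃ Σ t, Fin (m t) := Fintype.equivOfCardEq (by simp [sum_m])
  refine ⟨fun i => (e i).1, PMF.ext fun t => ?_⟩
  let fiberEquiv : {i // (e i).1 = t} ≃ Fin (m t) :=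
    (e.subtypeEquiv fun _ => Iff.rfl).trans (Equiv.sigmaSubtype t)
  rw [map_uniformOfFintype_apply, hm, Nat.card_congr fiberEquiv, Nat.card_fin, Fintype.card_fin]

theorem exists_forall_map_uniformOfFintype_eq {K S : Type*} [Finite K] [Finite S] {p : K → PMF S}
    (hp : ∀ k t, ∃ q : ℚ, p k t = ENNReal.ofReal q) :
    ∃ (N : ℕ) (_ : NeZero N) (f : K → Fin N → S),
      ∀ k, (PMF.uniformOfFintype (Fin N)).map (f k) = p k := by
  obtain ⟨N, hN, m, hm⟩ :=
    exists_eq_natCast_div_of_rational (p := fun i : K × S => p i.1 i.2) fun i => hp i.1 i.2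
  have : NeZero N := ⟨hN⟩
  choose f hf using fun k => exists_map_uniformOfFintype_eq (p k) fun t => hm (k, t)
  exact ⟨N, this, f, hf⟩

/-- The law of an element drawn from `p` together with an independent uniform element of `R`. -/
noncomputable def withUniform {A : Type*} (R : Type*) [Fintype R] [Nonempty R] (p : PMF A) :
    PMF (A × R) :=
  p.bind fun a => (PMF.uniformOfFintype R).map (Prod.mk a)

end UniformSampling

section Play

variable {G : OsTGame} {σ : List G.S → PMF G.A₁} {π : List G.S → PMF G.A₂}

instance : DiscreteMeasurableSpace G.S := ⟨fun _ => trivial⟩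

theorem listProb_concat {hist h l : List G.S} {cur x : G.S} (hl : cur :: l = h ++ [x]) (y : G.S) :
    listProb G σ π hist cur (l ++ [y]) =
      listProb G σ π hist cur l * step G σ π (hist ++ h) x y := by
  induction l generalizing hist cur h with
  | nil =>
    obtain ⟨rfl, rfl⟩ : h = [] ∧ cur = x := by
      simpa using List.append_inj' (s₁ := []) hl rfl |>.imp_left Eq.symm
    simp [listProb]
  | cons z l ih =>
    rcases h with - | ⟨z', h⟩
    · simp at hl
    · obtain ⟨rfl, tail_eq⟩ := List.cons_eq_cons.1 hl
      simp [listProb, ih tail_eq, mul_assoc]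

theorem IsPlayMeasure.isProcessLaw
    {Pr : G.S → (List G.S → PMF G.A₁) → (List G.S → PMF G.A₂) → Measure (ℕ → G.S)}
    (hPr : IsPlayMeasure G Pr) (s : G.S) (σ : List G.S → PMF G.A₁) (π : List G.S → PMF G.A₂) :
    IsProcessLaw (step G σ π) s (Pr s σ π) := by
  have := hPr.1 s σ π
  have ae_start : ∀ᵐ ρ ∂Pr s σ π, ρ 0 = s := by
    have prob_Cyl : Pr s σ π (Cyl [s]) = 1 := by rw [hPr.2, listProb]
    filter_upwards [(mem_ae_iff_prob_eq_one (measurableSet_Cyl _)).2 prob_Cyl] with ρ hρ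
    exact Cyl_subset_coord_zero s [] hρ
  refine ⟨this, ae_start, fun h x y => ?_⟩
  obtain ⟨z, l, hl⟩ := List.exists_cons_of_ne_nil (List.concat_ne_nil x h)
  rw [hl, List.cons_append]
  by_cases hz : z = s
  · subst hz
    rw [hPr.2, hPr.2, listProb_concat hl.symm, List.nil_append]
  · have Cyl_null (l : List G.S) : Pr s σ π (Cyl (z :: l)) = 0 :=
      measure_mono_null (fun ρ hρ h0 => hz ((Cyl_subset_coord_zero z l hρ).symm.trans h0)) ae_start
    rw [Cyl_null, Cyl_null, zero_mul]

/-- The law of the state following `s` when the players choose the actions `a` and `b`, of which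
only that of the player in turn matters. -/
noncomputable def transition (G : OsTGame) (s : G.S) (a : G.A₁) (b : G.A₂) : PMF G.S :=
  if G.turn s then G.δ₁ s a else G.δ₂ s b

theorem step_eq_bind_transition (h : List G.S) (s t : G.S) :
    step G σ π h s t =
      ((π (h ++ [s])).bind fun b => (σ (h ++ [s])).bind fun a => transition G s a b) t := by
  cases hs : G.turn s <;> simp [step, transition, hs, PMF.bind_const, PMF.bind_apply]

theorem RationalProbs.exists_rat_transition (hG : RationalProbs G) (s : G.S) (a : G.A₁)
    (b : G.A₂) (t : G.S) : ∃ q : ℚ, transition G s a b t = ENNReal.ofReal q := by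
  unfold transition
  split_ifs
  exacts [hG.1 s a t, hG.2 s b t]

end Play

section Sampler

variable {G : OsTGame} {R : Type} [Fintype R] [Nonempty R]

/-- `F s a b` turns a uniform element of `R` into a random successor of `s` under the actions `a`
and `b`. -/
def IsSampler (G : OsTGame) (F : G.S → G.A₁ → G.A₂ → R → G.S) : Prop :=
  ∀ s a b, (PMF.uniformOfFintype R).map (F s a b) = transition G s a b

theorem RationalProbs.exists_isSampler (hG : RationalProbs G) :
    ∃ (N : ℕ) (_ : NeZero N) (F : G.S → G.A₁ → G.A₂ → Fin N → G.S), IsSampler G F := by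
  obtain ⟨N, hN, f, hf⟩ := exists_forall_map_uniformOfFintype_eq
    (p := fun k : G.S × G.A₁ × G.A₂ => transition G k.1 k.2.1 k.2.2)
    fun k => hG.exists_rat_transition k.1 k.2.1 k.2.2
  exact ⟨N, hN, fun s a b => f (s, a, b), fun s a b => hf (s, a, b)⟩

end Sampler

section Round

variable {G : OsTGame} {R : Type} [AddGroup R]

/-- The state after a round from `s` in which player 2 chose `c = (b, j)` and player 1 chose
`x = (a, i)`: the players jointly draw the random element `i + j`. -/
def roundResult (F : G.S → G.A₁ → G.A₂ → R → G.S) (s : G.S) (c : G.A₂ × R) (x : G.A₁ × R) : G.S :=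
  F s x.1 c.1 (x.2 + c.2)

variable [Fintype R] {F : G.S → G.A₁ → G.A₂ → R → G.S}

theorem map_roundResult_withUniform (hF : IsSampler G F) (s : G.S) (c : G.A₂ × R) (p : PMF G.A₁) :
    (withUniform R p).map (roundResult F s c) = p.bind fun a => transition G s a c.1 := by
  simp only [withUniform, PMF.map_bind, PMF.map_comp]
  refine congrArg p.bind (funext fun a => ?_)
  conv_rhs => rw [← hF, ← map_equiv_uniformOfFintype (Equiv.addRight c.2), PMF.map_comp]
  rfl

theorem withUniform_bind_map_roundResult (hF : IsSampler G F) (s : G.S) (p : PMF G.A₂)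
    (q : PMF (G.A₁ × R)) :
    ((withUniform R p).bind fun c => q.map (roundResult F s c)) =
      p.bind fun b => (q.map Prod.fst).bind fun a => transition G s a b := by
  simp only [withUniform, PMF.bind_bind, PMF.bind_map]
  refine congrArg p.bind (funext fun b => ?_)
  change ((PMF.uniformOfFintype R).bind fun j => q.bind fun x => PMF.pure (F s x.1 b (x.2 + j))) = _
  rw [PMF.bind_comm]
  refine congrArg q.bind (funext fun x => ?_)
  conv_rhs =>
    rw [Function.comp, ← hF, ← map_equiv_uniformOfFintype (Equiv.addLeft x.2), PMF.map_comp]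
  rfl

end Round

section Derandomize

variable {G : OsTGame} {R : Type} [AddGroup R] [Fintype R]

/-- The deterministic game in which every round of `G` takes two moves: in `inl s` player 2 commits
to `c = (b, j)`, moving to `inr (s, c)`, and there player 1, who observes only that a round is under
way, picks `x = (a, i)`, moving to the successor sampled from `i + j`. -/
noncomputable def derandomize (F : G.S → G.A₁ → G.A₂ → R → G.S) : OsTGame where
  S := G.S ⊕ G.S × (G.A₂ × R)
  turn := Sum.isRight
  A₁ := G.A₁ × R
  A₂ := G.A₂ × R
  O := Option G.O
  δ₁ y x := PMF.pure (y.elim Sum.inl fun p => Sum.inl (roundResult F p.1 p.2 x))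
  δ₂ y c := PMF.pure (y.elim (fun s => Sum.inr (s, c)) Sum.inr)
  obs₁ y := y.getLeft?.map G.obs₁

theorem deterministic_derandomize (F : G.S → G.A₁ → G.A₂ → R → G.S) :
    Deterministic (derandomize F) :=
  ⟨fun _ _ => ⟨_, rfl⟩, fun _ _ => ⟨_, rfl⟩⟩

variable (F : G.S → G.A₁ → G.A₂ → R → G.S)

/-- The state `s` of `G` as a state of the deterministic game, where player 2 is to move. -/
def roundStart (s : G.S) : (derandomize F).S := Sum.inl s

/-- The state of the deterministic game reached from `s` by the commitment `c` of player 2. -/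
def committed (s : G.S) (c : G.A₂ × R) : (derandomize F).S := Sum.inr (s, c)

/-- The state of `G` from which the current round of the deterministic game started. -/
def originalState (y : (derandomize F).S) : G.S := Sum.elim id Prod.fst y

/-- The play of `G` underlying a play of the deterministic game. -/
def project (ρ : ℕ → (derandomize F).S) (n : ℕ) : G.S := originalState F (ρ (2 * n))

/-- The commitment of player 2 in round `n`, an arbitrary one if that round is not legal. -/
noncomputable def commitment (ρ : ℕ → (derandomize F).S) (n : ℕ) : G.A₂ × R :=
  Sum.elim (fun _ => Classical.arbitrary _) Prod.snd (ρ (2 * n + 1))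

/-- The history of `G` underlying a history of the deterministic game. -/
def contract (h : List (derandomize F).S) : List G.S := h.filterMap Sum.getLeft?

/-- A history of the deterministic game, ending with a commitment, that projects to the given
history of `G`. -/
noncomputable def embed (l : List G.S) : List (derandomize F).S :=
  l.flatMap fun s => [roundStart F s, committed F s (Classical.arbitrary _)]

variable {F}

theorem roundStart_injective : Function.Injective (roundStart F) := Sum.inl_injective

theorem committed_injective (s : G.S) : Function.Injective (committed F s) :=
  Sum.inr_injective.comp (Prod.mk_right_injective s)

theorem measurableSet_commitment_eq (n : ℕ) (c : G.A₂ × R) :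
    MeasurableSet ((commitment F · n) ⁻¹' {c}) :=
  measurableSet_coord (α := (derandomize F).S) (2 * n + 1)
    (Sum.elim (fun _ => Classical.arbitrary _) Prod.snd ⁻¹' {c})

theorem measurable_project : Measurable (project F) :=
  measurable_pi_lambda _ fun n =>
    (measurable_of_countable (originalState F)).comp (measurable_pi_apply (2 * n))

theorem dependsOn_project_mem_Cyl (l : List G.S) (s : G.S) :
    DependsOn (· ∈ project F ⁻¹' Cyl (l ++ [s])) (Set.Iio (2 * l.length + 1)) := fun ρ ρ' h => by
  have project_eq {i : ℕ} (hi : i ≤ l.length) : project F ρ i = project F ρ' i :=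
    congrArg (originalState F) (h (2 * i) (Set.mem_Iio.2 (by lia)))
  simp only [Set.mem_preimage, mem_Cyl_concat_iff, project_eq le_rfl,
    history_eq_iff.2 fun _ hi => project_eq (le_of_lt hi)]

theorem contract_append (h h' : List (derandomize F).S) :
    contract F (h ++ h') = contract F h ++ contract F h' :=
  List.filterMap_append

theorem contract_roundStart (s : G.S) : contract F [roundStart F s] = [s] := rfl

theorem contract_embed (l : List G.S) : contract F (embed F l) = l := by
  induction l with
  | nil => rfl
  | cons s l ih => exact congrArg (List.cons s) ih

theorem map_obs₁_contract_congr {h h' : List (derandomize F).S}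
    (hobs : h.map (derandomize F).obs₁ = h'.map (derandomize F).obs₁) :
    (contract F h).map G.obs₁ = (contract F h').map G.obs₁ := by
  have map_obs₁_contract (h : List (derandomize F).S) :
      (contract F h).map G.obs₁ = List.reduceOption (h.map (derandomize F).obs₁) := by
    induction h with
    | nil => rfl
    | cons y h ih =>
      rcases y with s | _
      exacts [congrArg (List.cons (G.obs₁ s)) ih, ih]
  rw [map_obs₁_contract, map_obs₁_contract]
  exact congrArg List.reduceOption hobs

theorem map_obs₁_embed_congr {l l' : List G.S} (hobs : l.map G.obs₁ = l'.map G.obs₁) :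
    (embed F l).map (derandomize F).obs₁ = (embed F l').map (derandomize F).obs₁ := by
  have map_obs₁_embed (l : List G.S) : (embed F l).map (derandomize F).obs₁ =
      (l.map G.obs₁).flatMap fun o => [some o, none] := by
    induction l with
    | nil => rfl
    | cons s l ih => exact congrArg ([some (G.obs₁ s), none] ++ ·) ih
  rw [map_obs₁_embed, map_obs₁_embed, hobs]

variable {σ' : List (derandomize F).S → PMF (G.A₁ × R)}
  {π' : List (derandomize F).S → PMF (G.A₂ × R)}

theorem step_roundStart (h : List (derandomize F).S) (s : G.S) (y : (derandomize F).S) :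
    step (derandomize F) σ' π' h (roundStart F s) y =
      ((π' (h ++ [roundStart F s])).map (committed F s)) y :=
  rfl

theorem step_committed (h : List (derandomize F).S) (s : G.S) (c : G.A₂ × R)
    (y : (derandomize F).S) :
    step (derandomize F) σ' π' h (committed F s c) y =
      (((σ' (h ++ [committed F s c])).map (roundResult F s c)).map (roundStart F)) y := by
  rw [PMF.map_comp]
  rfl

/-- The plays in which the two kinds of states alternate, starting with a round. -/
def IsLegal (ρ : ℕ → (derandomize F).S) : Prop :=
  ∀ n, ρ (2 * n) = roundStart F (project F ρ n) ∧
    ρ (2 * n + 1) = committed F (project F ρ n) (commitment F ρ n)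

theorem IsProcessLaw.ae_isLegal {s : G.S} {μ : Measure (ℕ → (derandomize F).S)}
    (hμ : IsProcessLaw (step (derandomize F) σ' π') (roundStart F s) μ) : ∀ᵐ ρ ∂μ, IsLegal ρ := by
  filter_upwards [hμ.ae_start, hμ.ae_transition_ne_zero] with ρ start transition
  have committed_of_roundStart {n : ℕ} {t : G.S} (h : ρ (2 * n) = roundStart F t) :
      ρ (2 * n + 1) = committed F t (commitment F ρ n) := by
    have := transition (2 * n)
    rw [h, step_roundStart, ← PMF.mem_support_iff, PMF.mem_support_map_iff] at this
    obtain ⟨c, -, hc⟩ := this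
    rw [commitment, ← hc]
    rfl
  have even (n : ℕ) : ∃ t, ρ (2 * n) = roundStart F t := by
    induction n with
    | zero => exact ⟨s, start⟩
    | succ n ih =>
      obtain ⟨t, ht⟩ := ih
      have := transition (2 * n + 1)
      rw [committed_of_roundStart ht, step_committed, ← PMF.mem_support_iff,
        PMF.mem_support_map_iff] at this
      obtain ⟨u, -, hu⟩ := this
      exact ⟨u, hu.symm⟩
  intro n
  obtain ⟨t, ht⟩ := even n
  obtain rfl : project F ρ n = t := by rw [project, ht]; rfl
  exact ⟨ht, committed_of_roundStart ht⟩

namespace IsLegal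

variable {ρ : ℕ → (derandomize F).S}

theorem history_two_mul_succ (hρ : IsLegal ρ) (n : ℕ) :
    history ρ (2 * (n + 1)) = history ρ (2 * n) ++
      [roundStart F (project F ρ n), committed F (project F ρ n) (commitment F ρ n)] := by
  rw [mul_add_one, history_succ, history_succ, ← (hρ n).1, ← (hρ n).2, List.append_assoc]
  rfl

theorem contract_history (hρ : IsLegal ρ) (n : ℕ) :
    contract F (history ρ (2 * n)) = history (project F ρ) n := by
  induction n with
  | zero => rfl
  | succ n ih => rw [hρ.history_two_mul_succ, contract_append, ih, history_succ]; rfl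

theorem map_obs₁_history (hρ : IsLegal ρ) (n : ℕ) :
    (history ρ (2 * n)).map (derandomize F).obs₁ =
      (embed F (history (project F ρ) n)).map (derandomize F).obs₁ := by
  induction n with
  | zero => rfl
  | succ n ih =>
    rw [hρ.history_two_mul_succ, history_succ, embed, List.flatMap_append, List.map_append, ih,
      List.map_append]
    rfl

theorem step_eq (hρ : IsLegal ρ) (hσ' : ObsBased (derandomize F) σ') {l : List G.S} {s : G.S}
    (hl : project F ρ ∈ Cyl (l ++ [s])) (t : G.S) :
    step (derandomize F) σ' π' (history ρ (2 * l.length + 1)) (ρ (2 * l.length + 1))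
        (roundStart F t) =
      ((σ' (embed F (l ++ [s]))).map (roundResult F s (commitment F ρ l.length))) t := by
  have σ'_history_eq : σ' (history ρ (2 * l.length + 1) ++ [ρ (2 * l.length + 1)]) =
      σ' (embed F (l ++ [s])) := by
    rw [← history_succ, ← mem_Cyl_iff.1 hl, List.length_append]
    exact hσ' _ _ (hρ.map_obs₁_history (l.length + 1))
  rw [(hρ l.length).2] at σ'_history_eq ⊢
  rw [step_committed, map_apply_of_injective roundStart_injective, σ'_history_eq,
    (mem_Cyl_concat_iff.1 hl).2]

end IsLegal

variable {σ : List G.S → PMF G.A₁} {π : List G.S → PMF G.A₂} {s₀ : G.S}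
  {μ : Measure (ℕ → (derandomize F).S)}

theorem isProcessLaw_map_project {q : List G.S → PMF (G.A₂ × R)}
    (hσ' : ObsBased (derandomize F) σ')
    (hμ : IsProcessLaw (step (derandomize F) σ' π') (roundStart F s₀) μ)
    (hq : ∀ l s, IsCondLaw μ (project F ⁻¹' Cyl (l ++ [s])) (commitment F · l.length)
      (q (l ++ [s])))
    (hstep : ∀ l s t, step G σ π l s t =
      ((q (l ++ [s])).bind fun c => (σ' (embed F (l ++ [s]))).map (roundResult F s c)) t) :
    IsProcessLaw (step G σ π) s₀ (μ.map (project F)) := by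
  have := hμ.isProbabilityMeasure
  have map_Cyl (l : List G.S) : μ.map (project F) (Cyl l) = μ (project F ⁻¹' Cyl l) :=
    Measure.map_apply measurable_project (measurableSet_Cyl l)
  refine ⟨Measure.isProbabilityMeasure_map measurable_project.aemeasurable, ?_, fun l s t => ?_⟩
  · refine (ae_map_iff measurable_project.aemeasurable (measurableSet_coord 0 {s₀})).2 ?_
    filter_upwards [hμ.ae_start] with ρ hρ
    exact congrArg (originalState F) hρ
  calc μ.map (project F) (Cyl (l ++ [s] ++ [t]))
      = μ (project F ⁻¹' Cyl (l ++ [s]) ∩ {ρ | ρ (2 * l.length + 1 + 1) = roundStart F t}) := by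
        rw [map_Cyl, Cyl_concat, Set.preimage_inter]
        refine measure_congr (ae_eq_set_inter (ae_eq_refl _) ?_)
        filter_upwards [hμ.ae_isLegal] with ρ hρ
        have next_eq : ρ (2 * l.length + 1 + 1) = roundStart F (project F ρ (l ++ [s]).length) := by
          rw [List.length_append]
          exact (hρ (l.length + 1)).1
        refine propext (?_ : project F ρ _ = t ↔ ρ (2 * l.length + 1 + 1) = roundStart F t)
        rw [next_eq, roundStart_injective.eq_iff]
    _ = ∫⁻ ρ in project F ⁻¹' Cyl (l ++ [s]),
          ((σ' (embed F (l ++ [s]))).map (roundResult F s (commitment F ρ l.length))) t ∂μ := by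
        rw [hμ.measure_inter_eq_setLIntegral
          ((dependsOn_project_mem_Cyl l s).mono (Set.Iio_subset_Iio (Nat.le_succ _)))]
        refine setLIntegral_congr_fun_ae (measurable_project (measurableSet_Cyl _)) ?_
        filter_upwards [hμ.ae_isLegal] with ρ hρ hl
        exact hρ.step_eq hσ' hl t
    _ = μ.map (project F) (Cyl (l ++ [s])) * step G σ π l s t := by
        rw [(hq l s).setLIntegral_comp (measurableSet_commitment_eq l.length)
          (fun c => ((σ' (embed F (l ++ [s]))).map (roundResult F s c)) t), map_Cyl, hstep,
          PMF.bind_apply]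

theorem isCondLaw_commitment (hμ : IsProcessLaw (step (derandomize F) σ' π') (roundStart F s₀) μ)
    {l : List G.S} {s : G.S} {p : PMF (G.A₂ × R)} (hp : ∀ h, contract F h = l ++ [s] → π' h = p) :
    IsCondLaw μ (project F ⁻¹' Cyl (l ++ [s])) (commitment F · l.length) p := fun c => by
  have E_measurable : MeasurableSet (project F ⁻¹' Cyl (l ++ [s])) :=
    measurable_project (measurableSet_Cyl _)
  calc μ (project F ⁻¹' Cyl (l ++ [s]) ∩ (commitment F · l.length) ⁻¹' {c})
      = μ (project F ⁻¹' Cyl (l ++ [s]) ∩ {ρ | ρ (2 * l.length + 1) = committed F s c}) := by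
        refine measure_congr ?_
        filter_upwards [hμ.ae_isLegal] with ρ hρ
        refine propext (and_congr_right fun hl => ?_)
        change commitment F ρ l.length = c ↔ ρ (2 * l.length + 1) = committed F s c
        rw [(hρ l.length).2, (mem_Cyl_concat_iff.1 hl).2, (committed_injective s).eq_iff]
    _ = ∫⁻ _ in project F ⁻¹' Cyl (l ++ [s]), p c ∂μ := by
        rw [hμ.measure_inter_eq_setLIntegral (dependsOn_project_mem_Cyl l s)]
        refine setLIntegral_congr_fun_ae E_measurable ?_
        filter_upwards [hμ.ae_isLegal] with ρ hρ hl
        obtain ⟨history_eq, state_eq⟩ := mem_Cyl_concat_iff.1 hl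
        rw [(hρ l.length).1, state_eq, step_roundStart,
          map_apply_of_injective (committed_injective s), hp]
        rw [contract_append, hρ.contract_history, history_eq, contract_roundStart]
    _ = μ (project F ⁻¹' Cyl (l ++ [s])) * p c := by rw [setLIntegral_const, mul_comm]

theorem exists_isProcessLaw_map_project_of_obsBased (hF : IsSampler G F) (hσ : ObsBased G σ)
    (s₀ : G.S) :
    ∃ σ', ObsBased (derandomize F) σ' ∧ ∀ π' μ,
      IsProcessLaw (step (derandomize F) σ' π') (roundStart F s₀) μ →
        ∃ π, IsProcessLaw (step G σ π) s₀ (μ.map (project F)) := by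
  have obsBased : ObsBased (derandomize F) fun h => withUniform R (σ (contract F h)) :=
    fun _ _ hobs => congrArg (withUniform R) (hσ _ _ (map_obs₁_contract_congr hobs))
  refine ⟨_, obsBased, fun π' μ hμ => ?_⟩
  have := hμ.isProbabilityMeasure
  choose q hq using fun l => exists_isCondLaw (measurable_project (measurableSet_Cyl l))
    (measurableSet_commitment_eq (F := F) (l.length - 1)) (μ := μ)
  refine ⟨fun l => (q l).map Prod.fst, isProcessLaw_map_project (q := q) obsBased hμ
    (fun l s => by simpa using hq (l ++ [s])) fun l s t => ?_⟩
  simp only [contract_embed, map_roundResult_withUniform hF, step_eq_bind_transition,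
    PMF.bind_map, Function.comp_def]

theorem exists_isProcessLaw_map_project_of_obsBased_derandomize (hF : IsSampler G F)
    (hσ' : ObsBased (derandomize F) σ') (s₀ : G.S) :
    ∃ σ, ObsBased G σ ∧ ∀ π, ∃ π', ∀ μ,
      IsProcessLaw (step (derandomize F) σ' π') (roundStart F s₀) μ →
        IsProcessLaw (step G σ π) s₀ (μ.map (project F)) := by
  refine ⟨fun l => (σ' (embed F l)).map Prod.fst, fun h h' hobs => ?_, fun π =>
    ⟨fun h => withUniform R (π (contract F h)), fun μ hμ => ?_⟩⟩
  · exact congrArg (PMF.map Prod.fst) (hσ' _ _ (map_obs₁_embed_congr hobs))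
  · refine isProcessLaw_map_project (q := fun l => withUniform R (π l)) hσ' hμ (fun l s => ?_)
      fun l s t => ?_
    · exact isCondLaw_commitment hμ fun h hh => congrArg (fun l => withUniform R (π l)) hh
    · rw [step_eq_bind_transition, withUniform_bind_map_roundResult hF]

end Derandomize

section Matching

variable {ι κ ι' κ' α : Type*} {f : ι → κ → α} {g : ι' → κ' → α}

/-- Every row of the payoff matrix `f` is matched by a row of `g` with no other entries, which
is at least as good for the player choosing the row. -/
def MatchedBy (f : ι → κ → α) (g : ι' → κ' → α) : Prop :=
  ∀ i, ∃ i', ∀ k', ∃ k, f i k = g i' k'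

namespace MatchedBy

theorem exists_forall (h : MatchedBy f g) {P : α → Prop} (hP : ∃ i, ∀ k, P (f i k)) :
    ∃ i', ∀ k', P (g i' k') := by
  obtain ⟨i, hi⟩ := hP
  obtain ⟨i', hi'⟩ := h i
  refine ⟨i', fun k' => ?_⟩
  obtain ⟨k, hk⟩ := hi' k'
  exact hk ▸ hi k

variable [CompleteLattice α]

theorem exists_iInf_le (h : MatchedBy f g) (i : ι) : ∃ i', ⨅ k, f i k ≤ ⨅ k', g i' k' := by
  obtain ⟨i', hi'⟩ := h i
  refine ⟨i', le_iInf fun k' => ?_⟩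
  obtain ⟨k, hk⟩ := hi' k'
  exact iInf_le_of_le k hk.le

theorem iSup_iInf_le (h : MatchedBy f g) : ⨆ i, ⨅ k, f i k ≤ ⨆ i', ⨅ k', g i' k' :=
  iSup_mono' h.exists_iInf_le

theorem exists_iInf_eq_iSup (h : MatchedBy f g) (h' : MatchedBy g f)
    (hf : ∃ i, ⨅ k, f i k = ⨆ i, ⨅ k, f i k) : ∃ i', ⨅ k', g i' k' = ⨆ i', ⨅ k', g i' k' := by
  obtain ⟨i, hi⟩ := hf
  obtain ⟨i', hi'⟩ := h.exists_iInf_le i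
  refine ⟨i', (le_iSup (fun i' => ⨅ k', g i' k') i').antisymm ?_⟩
  exact h'.iSup_iInf_le.trans (hi.ge.trans hi')

end MatchedBy

end Matching

section Payoff

variable {G : OsTGame}
  {Pr : G.S → (List G.S → PMF G.A₁) → (List G.S → PMF G.A₂) → Measure (ℕ → G.S)}

/-- The probability that the play from `s` satisfies `φ`, as a function of the strategies. -/
def payoff (Pr : G.S → (List G.S → PMF G.A₁) → (List G.S → PMF G.A₂) → Measure (ℕ → G.S))
    (φ : Set (ℕ → G.S)) (s : G.S) (σ : {σ : List G.S → PMF G.A₁ // ObsBased G σ})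
    (π : List G.S → PMF G.A₂) : ℝ≥0∞ :=
  Pr s σ.1 π φ

variable {R : Type} [AddGroup R] [Fintype R] {F : G.S → G.A₁ → G.A₂ → R → G.S}
  {Pr' : (derandomize F).S → (List (derandomize F).S → PMF (derandomize F).A₁) →
    (List (derandomize F).S → PMF (derandomize F).A₂) → Measure (ℕ → (derandomize F).S)}

theorem measure_eq_of_isProcessLaw_map_project {φ : Set (ℕ → G.S)} (hφ : MeasurableSet φ)
    (hPr : IsPlayMeasure G Pr) {s : G.S} {σ : List G.S → PMF G.A₁} {π : List G.S → PMF G.A₂}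
    {μ : Measure (ℕ → (derandomize F).S)}
    (hμ : IsProcessLaw (step G σ π) s (μ.map (project F))) :
    Pr s σ π φ = μ (project F ⁻¹' φ) := by
  rw [(hPr.isProcessLaw s σ π).unique hμ, Measure.map_apply measurable_project hφ]

theorem matchedBy_payoff_derandomize (hF : IsSampler G F) {φ : Set (ℕ → G.S)}
    (hφ : MeasurableSet φ) (hPr : IsPlayMeasure G Pr) (hPr' : IsPlayMeasure (derandomize F) Pr')
    (s : G.S) :
    MatchedBy (payoff Pr φ s) (payoff Pr' (project F ⁻¹' φ) (roundStart F s)) := by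
  rintro ⟨σ, hσ⟩
  obtain ⟨σ', hσ', exists_law⟩ := exists_isProcessLaw_map_project_of_obsBased hF hσ s
  refine ⟨⟨σ', hσ'⟩, fun π' => ?_⟩
  obtain ⟨π, hπ⟩ := exists_law π' _ (hPr'.isProcessLaw _ σ' π')
  exact ⟨π, measure_eq_of_isProcessLaw_map_project hφ hPr hπ⟩

theorem payoff_derandomize_matchedBy (hF : IsSampler G F) {φ : Set (ℕ → G.S)}
    (hφ : MeasurableSet φ) (hPr : IsPlayMeasure G Pr) (hPr' : IsPlayMeasure (derandomize F) Pr')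
    (s : G.S) :
    MatchedBy (payoff Pr' (project F ⁻¹' φ) (roundStart F s)) (payoff Pr φ s) := by
  rintro ⟨σ', hσ'⟩
  obtain ⟨σ, hσ, exists_law⟩ := exists_isProcessLaw_map_project_of_obsBased_derandomize hF hσ' s
  refine ⟨⟨σ, hσ⟩, fun π => ?_⟩
  obtain ⟨π', hπ'⟩ := exists_law π
  exact ⟨π', (measure_eq_of_isProcessLaw_map_project hφ hPr
    (hπ' _ (hPr'.isProcessLaw _ σ' π'))).symm⟩

end Payoff

theorem stmt_17 (G : OsTGame) (hrat : RationalProbs G)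
    (φ : Set (ℕ → G.S)) (hφ : MeasurableSet φ) :
    ∃ (G' : OsTGame) (ι : G.S → G'.S) (φ' : Set (ℕ → G'.S)),
      Function.Injective ι ∧ Deterministic G' ∧ MeasurableSet φ' ∧
      ∀ Pr, IsPlayMeasure G Pr → ∀ Pr', IsPlayMeasure G' Pr' →
        ∀ s : G.S,
          ((∃ σ, ObsBased G σ ∧ ∀ π, Pr s σ π φ = 1) ↔
            (∃ σ', ObsBased G' σ' ∧ ∀ π', Pr' (ι s) σ' π' φ' = 1)) ∧
          ((∃ σ, ObsBased G σ ∧ ∀ π, 0 < Pr s σ π φ) ↔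
            (∃ σ', ObsBased G' σ' ∧ ∀ π', 0 < Pr' (ι s) σ' π' φ')) ∧
          (val G Pr φ s = val G' Pr' φ' (ι s)) ∧
          ((∃ σ, ObsBased G σ ∧ (⨅ π, Pr s σ π φ) = val G Pr φ s) ↔
            (∃ σ', ObsBased G' σ' ∧ (⨅ π', Pr' (ι s) σ' π' φ') = val G' Pr' φ' (ι s))) := by
  obtain ⟨N, _, F, hF⟩ := hrat.exists_isSampler
  refine ⟨derandomize F, roundStart F, project F ⁻¹' φ, roundStart_injective,
    deterministic_derandomize F, measurable_project hφ, fun Pr hPr Pr' hPr' s => ?_⟩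
  have lift := matchedBy_payoff_derandomize hF hφ hPr hPr' s
  have descend := payoff_derandomize_matchedBy hF hφ hPr hPr' s
  have transfer (P : ℝ≥0∞ → Prop) : (∃ σ, ObsBased G σ ∧ ∀ π, P (Pr s σ π φ)) ↔
      ∃ σ', ObsBased (derandomize F) σ' ∧
        ∀ π', P (Pr' (roundStart F s) σ' π' (project F ⁻¹' φ)) := by
    simpa only [Subtype.exists, exists_prop, payoff] using
      (⟨lift.exists_forall, descend.exists_forall⟩ :
        (∃ σ, ∀ π, P (payoff Pr φ s σ π)) ↔ ∃ σ', ∀ π', P (payoff Pr' _ _ σ' π'))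
  refine ⟨transfer (· = 1), transfer (0 < ·),
    lift.iSup_iInf_le.antisymm descend.iSup_iInf_le, ?_⟩
  simpa only [Subtype.exists, exists_prop, payoff, val] using
    Iff.intro (lift.exists_iInf_eq_iSup descend) (descend.exists_iInf_eq_iSup lift)

end Stmt17
end
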